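/- Let n ≥ 3 and α > n−1. Then every homeomorphism of finite distortion between domains in ℝ^n of the Sobolev class W^{1,α}_loc is a lower K_p(x,f)-homeomorphism with respect to p-modulus at every point, for every p > n−1. -/

import Mathlib

open MeasureTheory Metric Set Filter
open scoped ENNReal NNReal Topology RealInnerProductSpace Classical

noncomputable section

abbrev Eucl (n : ℕ) : Type := EuclideanSpace ℝ (Fin n)

/-- A `k`-dimensional surface in `ℝⁿ`: a continuous map defined on an open subset of the
one-point compactification of `ℝᵏ`. -/
structure Surface (n k : ℕ) where
  dom : Set (OnePoint (Eucl k))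
  isOpen_dom : IsOpen dom
  toFun : OnePoint (Eucl k) → Eucl n
  continuousOn : ContinuousOn toFun dom

namespace Surface

variable {n k : ℕ}

/-- The multiplicity function `N(S,y)` of a surface. -/
def mult (S : Surface n k) (y : Eucl n) : ℝ≥0∞ :=
  ((S.dom ∩ S.toFun ⁻¹' {y}).encard : ℕ∞)

/-- The integral `∫_S ρ dA = ∫ ρ(y) N(S,y) dH^k(y)` of `ρ` over the surface `S`. -/
def sint (S : Surface n k) (ρ : Eucl n → ℝ≥0∞) : ℝ≥0∞ :=
  ∫⁻ y, ρ y * S.mult y ∂(μH[(k : ℝ)] : Measure (Eucl n))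

end Surface

/-- Admissible functions for a family of `k`-surfaces. -/
def surfAdm {n : ℕ} (k : ℕ) (Γ : Set (Surface n k)) : Set (Eucl n → ℝ≥0∞) :=
  {ρ | Measurable ρ ∧ ∀ S ∈ Γ, 1 ≤ S.sint fun y => ρ y ^ k}

/-- The `p`-modulus of a family of `k`-surfaces. -/
def surfModulus {n : ℕ} (p : ℝ) (k : ℕ) (Γ : Set (Surface n k)) : ℝ≥0∞ :=
  ⨅ ρ ∈ surfAdm k Γ, ∫⁻ x, ρ x ^ p

/-- Extensively `p`-admissible functions: admissibility may fail on a subfamily of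
`p`-modulus zero. -/
def extAdm {n : ℕ} (p : ℝ) (k : ℕ) (Γ : Set (Surface n k)) : Set (Eucl n → ℝ≥0∞) :=
  {ρ | Measurable ρ ∧ surfModulus p k {S ∈ Γ | ¬ 1 ≤ S.sint fun y => ρ y ^ k} = 0}

/-- The family of the (injectively parametrized, nonempty) surfaces `S(x₀,r) ∩ D`,
`r ∈ I`. -/
def sphereFam {n : ℕ} (D : Set (Eucl n)) (x₀ : Eucl n) (I : Set ℝ) :
    Set (Surface n (n - 1)) :=
  {S | ∃ r ∈ I, S.dom.Nonempty ∧ Set.InjOn S.toFun S.dom ∧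
      S.toFun '' S.dom = sphere x₀ r ∩ D}

/-- The image of a family of surfaces under a map `f`. -/
def imageFam {n k : ℕ} (f : Eucl n → Eucl n) (Γ : Set (Surface n k)) :
    Set (Surface n k) :=
  {S' | ∃ S ∈ Γ, S'.dom = S.dom ∧ Set.EqOn S'.toFun (f ∘ S.toFun) S.dom}

/-- The spherical ring `R(x₀,a,b)`. -/
def ringA {n : ℕ} (x₀ : Eucl n) (a b : ℝ) : Set (Eucl n) :=
  {x | a < dist x x₀ ∧ dist x x₀ < b}

/-- `‖Q‖_α(r) = (∫_{D ∩ S(x₀,r)} Q^α dA)^{1/α}`. -/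
def sphNorm {n : ℕ} (D : Set (Eucl n)) (x₀ : Eucl n) (Q : Eucl n → ℝ≥0∞)
    (α : ℝ) (r : ℝ) : ℝ≥0∞ :=
  (∫⁻ x in D ∩ sphere x₀ r, Q x ^ α ∂(μH[((n : ℝ) - 1)] : Measure (Eucl n))) ^ (1 / α)

/-- `f` is a lower `Q`-homeomorphism w.r.t. the `p`-modulus at `x₀`. -/
def IsLowerQHomeoAt {n : ℕ} (D : Set (Eucl n)) (f : Eucl n → Eucl n)
    (Q : Eucl n → ℝ≥0∞) (p : ℝ) (x₀ : Eucl n) (d₀ : ℝ≥0∞) : Prop :=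
  ∀ ε ε₀ : ℝ, 0 < ε → ε < ε₀ → ENNReal.ofReal ε₀ < d₀ →
    (⨅ ρ ∈ extAdm p (n - 1) (sphereFam D x₀ (Ioo ε ε₀)),
        ∫⁻ x in ringA x₀ ε ε₀, ρ x ^ p / Q x) ≤
      surfModulus p (n - 1) (imageFam f (sphereFam D x₀ (Ioo ε ε₀)))

/-- `f` is a homeomorphism of `D` onto `D'`. -/
structure IsHomeoOn {n : ℕ} (f : Eucl n → Eucl n) (D D' : Set (Eucl n)) : Prop where
  continuousOn : ContinuousOn f D
  injOn : Set.InjOn f D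
  image_eq : f '' D = D'
  isOpenMapOn : ∀ U : Set (Eucl n), U ⊆ D → IsOpen U → IsOpen (f '' U)

/-- `Df` is the weak (Sobolev) derivative of `f` on `D`, and `f ∈ W^{1,1}_loc(D)`. -/
def IsWeakDerivOn {n m : ℕ} (D : Set (Eucl n)) (f : Eucl n → Eucl m)
    (Df : Eucl n → Eucl n →L[ℝ] Eucl m) : Prop :=
  LocallyIntegrableOn f D volume ∧ LocallyIntegrableOn Df D volume ∧
  ∀ ψ : Eucl n → ℝ, ContDiff ℝ (⊤ : ℕ∞) ψ → HasCompactSupport ψ → tsupport ψ ⊆ D →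
    ∀ v : Eucl n, ∫ x, ψ x • Df x v = - ∫ x, fderiv ℝ ψ x v • f x

/-- The Frobenius norm `|∇f| = (Σ_{i,j} (∂f_i/∂x_j)²)^{1/2}` of a linear map. -/
def frobNorm {n m : ℕ} (A : Eucl n →L[ℝ] Eucl m) : ℝ :=
  Real.sqrt (∑ i : Fin m, ∑ j : Fin n, (A (EuclideanSpace.single j 1) i) ^ 2)

/-- The Orlicz–Sobolev class `W^{1,φ}_loc(D)` (with explicit weak derivative `Df`). -/
def MemOrliczSobolevOn {n m : ℕ} (φ : ℝ → ℝ) (D : Set (Eucl n))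
    (f : Eucl n → Eucl m) (Df : Eucl n → Eucl n →L[ℝ] Eucl m) : Prop :=
  IsWeakDerivOn D f Df ∧
  ∀ K : Set (Eucl n), K ⊆ D → IsCompact K →
    (∫⁻ x in K, ENNReal.ofReal (φ (frobNorm (Df x)))) < ⊤

/-- `φ` is nondecreasing and positive on `(0,∞)`. -/
def NondecPos (φ : ℝ → ℝ) : Prop :=
  (∀ s t : ℝ, 0 < s → s ≤ t → φ s ≤ φ t) ∧ ∀ t : ℝ, 0 < t → 0 < φ t

/-- The Calderón-type condition `∫_{t₀}^∞ (t/φ(t))^{1/(n-2)} dt < ∞`. -/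
def CalderonCond (n : ℕ) (φ : ℝ → ℝ) : Prop :=
  ∃ t₀ : ℝ, 0 < t₀ ∧
    IntegrableOn (fun t => (t / φ t) ^ (1 / ((n : ℝ) - 2))) (Ioi t₀) volume

/-- `f` (with a.e. derivative `Df`) has finite distortion on `D`. -/
def HasFiniteDistortionOn {n : ℕ} (D : Set (Eucl n))
    (Df : Eucl n → Eucl n →L[ℝ] Eucl n) : Prop :=
  ∃ K : Eucl n → ℝ, AEMeasurable K (volume.restrict D) ∧
    ∀ᵐ x ∂volume.restrict D, 1 ≤ K x ∧ ‖Df x‖ ^ n ≤ K x * (Df x).det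

/-- The distortion `K_p(x,f)` for a map with derivative `Df`. -/
def distortionKp {n : ℕ} (p : ℝ) (Df : Eucl n → Eucl n →L[ℝ] Eucl n)
    (x : Eucl n) : ℝ≥0∞ :=
  if (Df x).det ≠ 0 then ENNReal.ofReal (‖Df x‖ ^ p / (Df x).det)
  else if Df x = 0 then 1 else ⊤

/-- The multiplicity function of a curve `γ : [0,1] → ℝⁿ`. -/
def curveMult {n : ℕ} (γ : ℝ → Eucl n) (y : Eucl n) : ℝ≥0∞ :=
  (({t ∈ Icc (0:ℝ) 1 | γ t = y}).encard : ℕ∞)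

/-- The line integral `∫_γ ρ ds = ∫ ρ(y) N(γ,y) dH¹(y)`. -/
def curveInt {n : ℕ} (γ : ℝ → Eucl n) (ρ : Eucl n → ℝ≥0∞) : ℝ≥0∞ :=
  ∫⁻ y, ρ y * curveMult γ y ∂(μH[(1 : ℝ)] : Measure (Eucl n))

/-- The family of curves joining `A` and `B` in `G`. -/
def curveJoin {n : ℕ} (A B G : Set (Eucl n)) : Set (ℝ → Eucl n) :=
  {γ | ContinuousOn γ (Icc 0 1) ∧ γ 0 ∈ A ∧ γ 1 ∈ B ∧ Set.MapsTo γ (Icc 0 1) G}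

/-- The `q`-modulus of a family of curves. -/
def curveModulus {n : ℕ} (q : ℝ) (Γ : Set (ℝ → Eucl n)) : ℝ≥0∞ :=
  ⨅ ρ ∈ {ρ : Eucl n → ℝ≥0∞ | Measurable ρ ∧ ∀ γ ∈ Γ, 1 ≤ curveInt γ ρ},
    ∫⁻ x, ρ x ^ q

/-- The `q`-capacity of the condenser `(A,C)`, via the modulus of joining curves. -/
def condenserCap {n : ℕ} (q : ℝ) (A C : Set (Eucl n)) : ℝ≥0∞ :=
  curveModulus q (curveJoin (frontier A) (frontier C) (A \ C))

/-- `L(x₀,f) = limsup_{x→x₀} |f(x)-f(x₀)|/|x-x₀|`. -/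
def LAt {n : ℕ} (f : Eucl n → Eucl n) (x₀ : Eucl n) : ℝ≥0∞ :=
  limsup (fun x => edist (f x) (f x₀) / edist x x₀) (𝓝[≠] x₀)

/-- `k_p(x₀) = limsup_{ε→0} (⨍_{B(x₀,ε)} K_p(x,f)^{(n-1)/(p-n+1)} dm)^{(p-n+1)/(n-1)}`. -/
def kpAt {n : ℕ} (p : ℝ) (Df : Eucl n → Eucl n →L[ℝ] Eucl n) (x₀ : Eucl n) : ℝ≥0∞ :=
  limsup (fun ε : ℝ =>
      ((∫⁻ x in ball x₀ ε, distortionKp p Df x ^ (((n:ℝ)-1)/(p-(n:ℝ)+1))) /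
        volume (ball x₀ ε)) ^ ((p-(n:ℝ)+1)/((n:ℝ)-1)))
    (𝓝[>] (0:ℝ))

/-- `f` is absolutely continuous on `S` w.r.t. `d`-dimensional Hausdorff measure. -/
def ACOnSet {n m : ℕ} (f : Eucl n → Eucl m) (S : Set (Eucl n)) (d : ℝ) : Prop :=
  ∀ ε : ℝ, 0 < ε → ∃ δ : ℝ, 0 < δ ∧ ∀ A : Set (Eucl n), A ⊆ S →
    (μH[d] : Measure (Eucl n)) A < ENNReal.ofReal δ →
      (μH[d] : Measure (Eucl m)) (f '' A) < ENNReal.ofReal ε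

/-- `f` is locally absolutely continuous on `S` w.r.t. `H^d`. -/
def LocACOnSet {n m : ℕ} (f : Eucl n → Eucl m) (S : Set (Eucl n)) (d : ℝ) : Prop :=
  ∀ x ∈ S, ∃ V ∈ 𝓝 x, ACOnSet f (S ∩ V) d

/-- The Luzin (N)-property of `f` on `S` w.r.t. `d`-dimensional Hausdorff measure. -/
def LusinNOn {n m : ℕ} (f : Eucl n → Eucl m) (S : Set (Eucl n)) (d : ℝ) : Prop :=
  ∀ A : Set (Eucl n), A ⊆ S → (μH[d] : Measure (Eucl n)) A = 0 →
    (μH[d] : Measure (Eucl m)) (f '' A) = 0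

end

/-!
Let `d = n - 1 < α`. Morrey's inequality on `d`-dimensional slices bounds the oscillation of a
mollification of `f` on the faces of a suitably chosen box by the mean of `‖Df‖ ^ α`. Since `f` is
open, its oscillation on the box is attained on the boundary, so the bound
`osc (f, B(x, r)) ^ α ≤ C r ^ α ⨍ ‖Df‖ ^ α` holds for small balls, although `α` may be less than
`n`. By Stepanov's theorem `f` is differentiable almost everywhere, with derivative `Df`; and
an Eilenberg-type covering argument shows that the image of a null set meets the images of almost
all spheres `S(x₀, r)` in sets of `H^d`-measure zero.

On each such sphere the area inequality gives `∫_{f(S)} ρ ^ d dH^d ≤ ∫_S (ρ ∘ f) ^ d ‖f'‖ ^ d dH^d`,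
so `(ρ ∘ f) ‖f'‖` is extensively admissible for the spheres whenever `ρ` is admissible for their
images. Its energy with weight `1 / K_p` is at most `∫ (ρ ∘ f) ^ p |J_f| ≤ ∫ ρ ^ p`.
-/

section Morrey

variable {E F : Type*} [NormedAddCommGroup E] [NormedSpace ℝ E] [NormedAddCommGroup F]

theorem enorm_sub_le_lintegral_enorm_fderiv [NormedSpace ℝ F] [CompleteSpace F] {u : E → F}
    (hu : ContDiff ℝ 1 u) (a b : E) :
    ‖u b - u a‖ₑ ≤ ∫⁻ t in Ioc (0 : ℝ) 1, ‖fderiv ℝ u (a + t • (b - a))‖ₑ * ‖b - a‖ₑ := by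
  have hline (t : ℝ) : HasDerivAt (fun t : ℝ ↦ a + t • (b - a)) (b - a) t := by
    simpa using ((hasDerivAt_id t).smul_const (b - a)).const_add a
  have hderiv (t : ℝ) : HasDerivAt (fun t : ℝ ↦ u (a + t • (b - a)))
      (fderiv ℝ u (a + t • (b - a)) (b - a)) t :=
    (hu.differentiable one_ne_zero _).hasFDerivAt.comp_hasDerivAt t (hline t)
  have hcont : Continuous fun t : ℝ ↦ fderiv ℝ u (a + t • (b - a)) (b - a) := by
    have := hu.continuous_fderiv one_ne_zero
    fun_prop
  have hftc := intervalIntegral.integral_eq_sub_of_hasDerivAt (fun t _ ↦ hderiv t)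
    (hcont.intervalIntegrable 0 1)
  simp only [one_smul, zero_smul, add_zero, add_sub_cancel] at hftc
  rw [← hftc, intervalIntegral.integral_of_le zero_le_one]
  exact (enorm_integral_le_lintegral_enorm _).trans
    (lintegral_mono fun t ↦ ContinuousLinearMap.le_opENorm _ _)

theorem rpow_laverage_le_laverage_rpow {X : Type*} [MeasurableSpace X] {μ : Measure X}
    [IsFiniteMeasure μ] {α : ℝ} (hα : 1 ≤ α) {h : X → ℝ≥0∞} (hh : AEMeasurable h μ) :
    (⨍⁻ x, h x ∂μ) ^ α ≤ ⨍⁻ x, h x ^ α ∂μ := by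
  rcases eq_zero_or_neZero μ with rfl | _
  · simp [(zero_lt_one.trans_le hα)]
  have hnorm := eLpNorm'_le_eLpNorm'_of_exponent_le zero_lt_one hα ((μ univ)⁻¹ • μ)
    (hh.smul_measure _).aestronglyMeasurable
  simp only [eLpNorm', enorm_eq_self, ENNReal.rpow_one, div_one] at hnorm
  rwa [one_div, ENNReal.le_rpow_inv_iff (zero_lt_one.trans_le hα)] at hnorm

variable [MeasurableSpace E] [BorelSpace E] [FiniteDimensional ℝ E]
  {μ : Measure E} [μ.IsAddHaarMeasure] {α : ℝ}

theorem lintegral_comp_add_smul (g : E → ℝ≥0∞) (x : E) {t : ℝ} (ht : 0 < t) :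
    ∫⁻ z, g (x + t • z) ∂μ =
      ENNReal.ofReal ((t ^ Module.finrank ℝ E)⁻¹) * ∫⁻ z, g z ∂μ := by
  have hmap := lintegral_map_equiv (μ := μ) (fun z ↦ g (x + z))
    (Homeomorph.smulOfNeZero t ht.ne').toMeasurableEquiv
  calc ∫⁻ z, g (x + t • z) ∂μ = ∫⁻ z, g (x + z) ∂(μ.map (t • ·)) := hmap.symm
    _ = _ := by
      rw [Measure.map_addHaar_smul μ ht.ne', lintegral_smul_measure,
        lintegral_add_left_eq_self g x, abs_of_pos (by positivity), smul_eq_mul]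

theorem setLIntegral_homothety_le {Q : Set E} (hQ : Convex ℝ Q) (hQm : MeasurableSet Q)
    (g : E → ℝ≥0∞) {x : E} (hx : x ∈ Q) {t : ℝ} (ht : t ∈ Ioc (0 : ℝ) 1) :
    ∫⁻ z in Q, g (x + t • (z - x)) ∂μ ≤
      ENNReal.ofReal ((t ^ Module.finrank ℝ E)⁻¹) * ∫⁻ z in Q, g z ∂μ := by
  calc ∫⁻ z in Q, g (x + t • (z - x)) ∂μ ≤ ∫⁻ z, Q.indicator g ((x - t • x) + t • z) ∂μ := by
        rw [← lintegral_indicator hQm]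
        refine lintegral_mono (indicator_le fun z hz ↦ ?_)
        have hmem := hQ.add_smul_sub_mem hx hz ⟨ht.1.le, ht.2⟩
        rw [show x - t • x + t • z = x + t • (z - x) by module, indicator_of_mem hmem]
    _ = _ := by rw [lintegral_comp_add_smul _ _ ht.1, lintegral_indicator hQm]

theorem lintegral_ofReal_rpow_Ioc {r : ℝ} (hr : -1 < r) :
    ∫⁻ t in Ioc (0 : ℝ) 1, ENNReal.ofReal (t ^ r) = ENNReal.ofReal (1 / (r + 1)) := by
  have hint : IntegrableOn (fun t : ℝ ↦ t ^ r) (Ioc 0 1) :=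
    (intervalIntegrable_iff_integrableOn_Ioc_of_le zero_le_one).1
      (intervalIntegral.intervalIntegrable_rpow' hr)
  rw [← ofReal_integral_eq_lintegral_ofReal hint
      ((ae_restrict_mem measurableSet_Ioc).mono fun t ht ↦ Real.rpow_nonneg ht.1.le r),
    ← intervalIntegral.integral_of_le zero_le_one, integral_rpow (Or.inl hr), Real.one_rpow,
    Real.zero_rpow (by linarith), sub_zero]

theorem setLAverage_lintegral_segment_le {Q : Set E} (hQ : Convex ℝ Q) (hQm : MeasurableSet Q)
    (hQtop : μ Q ≠ ⊤) (hα : 1 ≤ α) (hdim : Module.finrank ℝ E < α) {h : E → ℝ≥0∞}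
    (hh : Measurable h) {x : E} (hx : x ∈ Q) :
    ⨍⁻ z in Q, (∫⁻ t in Ioc (0 : ℝ) 1, h (x + t • (z - x))) ∂μ ≤
      ENNReal.ofReal (α / (α - Module.finrank ℝ E)) * (⨍⁻ z in Q, h z ^ α ∂μ) ^ (1 / α) := by
  set d := Module.finrank ℝ E
  have hα0 : 0 < α := zero_lt_one.trans_le hα
  have : IsFiniteMeasure (μ.restrict Q) := isFiniteMeasure_restrict.2 hQtop
  have hslice (t : ℝ) (ht : t ∈ Ioc (0 : ℝ) 1) :
      ⨍⁻ z in Q, h (x + t • (z - x)) ∂μ ≤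
        ENNReal.ofReal (t ^ (-(d / α))) * (⨍⁻ z in Q, h z ^ α ∂μ) ^ (1 / α) := by
    have hpow : (t ^ (-(d / α) : ℝ)) ^ α = (t ^ d)⁻¹ := by
      rw [← Real.rpow_mul ht.1.le, neg_mul, div_mul_cancel₀ _ hα0.ne', Real.rpow_neg ht.1.le,
        Real.rpow_natCast]
    rw [← ENNReal.rpow_le_rpow_iff hα0, ENNReal.mul_rpow_of_nonneg _ _ hα0.le, ← ENNReal.rpow_mul,
      one_div_mul_cancel hα0.ne', ENNReal.rpow_one,
      ENNReal.ofReal_rpow_of_pos (Real.rpow_pos_of_pos ht.1 _), hpow]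
    refine (rpow_laverage_le_laverage_rpow hα (by fun_prop)).trans ?_
    rw [setLAverage_eq, setLAverage_eq, ← mul_div_assoc]
    gcongr
    exact setLIntegral_homothety_le hQ hQm (fun z ↦ h z ^ α) hx ht
  calc ⨍⁻ z in Q, (∫⁻ t in Ioc (0 : ℝ) 1, h (x + t • (z - x))) ∂μ
      = ∫⁻ t in Ioc (0 : ℝ) 1, ⨍⁻ z in Q, h (x + t • (z - x)) ∂μ := by
        simp only [laverage]
        exact lintegral_lintegral_swap (by fun_prop)
    _ ≤ ∫⁻ t in Ioc (0 : ℝ) 1,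
          ENNReal.ofReal (t ^ (-(d / α) : ℝ)) * (⨍⁻ z in Q, h z ^ α ∂μ) ^ (1 / α) :=
        setLIntegral_mono' measurableSet_Ioc hslice
    _ = _ := by
        have hexp : (-1 : ℝ) < -(d / α) := neg_lt_neg ((div_lt_one hα0).2 hdim)
        rw [lintegral_mul_const _ (by fun_prop), lintegral_ofReal_rpow_Ioc hexp]
        have hinv : 1 / (-(d / α) + 1) = α / (α - d) := by
          rw [neg_add_eq_sub, one_sub_div hα0.ne', one_div_div]
        rw [hinv]

/-- The constant in Morrey's inequality for convex sets in dimension `d`, with exponent `α > d`. -/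
noncomputable def morreyConst (d : ℕ) (α : ℝ) : ℝ≥0∞ :=
  (2 * ENNReal.ofReal (α / (α - d))) ^ α

theorem morreyConst_ne_top (d : ℕ) {α : ℝ} (hα : 0 ≤ α) : morreyConst d α ≠ ⊤ :=
  ENNReal.rpow_ne_top_of_nonneg hα (ENNReal.mul_ne_top ENNReal.ofNat_ne_top ENNReal.ofReal_ne_top)

-- Both values are compared with `V z` and the resulting inequality is averaged over `z ∈ Q`.
theorem enorm_sub_rpow_le_morreyConst_mul {Q : Set E} (hQ : Convex ℝ Q) (hQm : MeasurableSet Q)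
    (hQ0 : μ Q ≠ 0) (hQtop : μ Q ≠ ⊤) (hα : 1 ≤ α) (hdim : Module.finrank ℝ E < α)
    {h : E → ℝ≥0∞} (hh : Measurable h) {V : E → F}
    (hV : ∀ x ∈ Q, ∀ z ∈ Q, ‖V z - V x‖ₑ ≤ ∫⁻ t in Ioc (0 : ℝ) 1, h (x + t • (z - x)))
    {x x' : E} (hx : x ∈ Q) (hx' : x' ∈ Q) :
    ‖V x - V x'‖ₑ ^ α ≤ morreyConst (Module.finrank ℝ E) α * ⨍⁻ z in Q, h z ^ α ∂μ := by
  have hα0 : 0 < α := zero_lt_one.trans_le hα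
  set A := ⨍⁻ z in Q, h z ^ α ∂μ
  set S : E → E → ℝ≥0∞ := fun y z ↦ ∫⁻ t in Ioc (0 : ℝ) 1, h (y + t • (z - y))
  have hS (y : E) : Measurable (S y) :=
    (hh.comp (by fun_prop : Measurable fun p : E × ℝ ↦ y + p.2 • (p.1 - y))).lintegral_prod_right'
  have htri (z : E) (hz : z ∈ Q) : ‖V x - V x'‖ₑ ≤ S x z + S x' z :=
    calc ‖V x - V x'‖ₑ = ‖(V z - V x') - (V z - V x)‖ₑ := by rw [sub_sub_sub_cancel_left]
      _ ≤ ‖V z - V x'‖ₑ + ‖V z - V x‖ₑ := enorm_sub_le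
      _ ≤ S x z + S x' z := by
        rw [add_comm]
        exact add_le_add (hV x hx z hz) (hV x' hx' z hz)
  have hroot : ‖V x - V x'‖ₑ ≤ 2 * ENNReal.ofReal (α / (α - Module.finrank ℝ E)) * A ^ (1 / α) :=
    calc ‖V x - V x'‖ₑ = ⨍⁻ _ in Q, ‖V x - V x'‖ₑ ∂μ := (setLAverage_const hQ0 hQtop _).symm
      _ ≤ ⨍⁻ z in Q, (S x z + S x' z) ∂μ :=
        laverage_mono_ae ((ae_restrict_mem hQm).mono htri)
      _ = ⨍⁻ z in Q, S x z ∂μ + ⨍⁻ z in Q, S x' z ∂μ := lintegral_add_left (hS x) _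
      _ ≤ _ := by
        rw [mul_assoc, two_mul]
        exact add_le_add (setLAverage_lintegral_segment_le hQ hQm hQtop hα hdim hh hx)
          (setLAverage_lintegral_segment_le hQ hQm hQtop hα hdim hh hx')
  calc ‖V x - V x'‖ₑ ^ α ≤ _ := ENNReal.rpow_le_rpow hroot hα0.le
    _ = _ := by
      rw [ENNReal.mul_rpow_of_nonneg _ _ hα0.le, ← ENNReal.rpow_mul, one_div_mul_cancel hα0.ne',
        ENNReal.rpow_one, morreyConst]

end Morrey

section Slice

variable {d : ℕ} {F : Type*} [NormedAddCommGroup F] {α : ℝ}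

theorem insertNth_mem_closedBall {R c : ℝ} (i : Fin (d + 1)) (hc : c ∈ Icc (-R) R)
    {w : Fin d → ℝ} (hw : w ∈ closedBall (0 : Fin d → ℝ) R) :
    i.insertNth c w ∈ closedBall (0 : Fin (d + 1) → ℝ) R := by
  have hR : 0 ≤ R := by linarith [hc.1, hc.2]
  rw [mem_closedBall, dist_zero_right, pi_norm_le_iff_of_nonneg hR] at hw ⊢
  rw [Fin.forall_iff_succAbove i]
  exact ⟨by simpa using abs_le.2 hc, fun j ↦ by simpa using hw j⟩

theorem insertNth_add_smul_sub (i : Fin (d + 1)) (c t : ℝ) (w w' : Fin d → ℝ) :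
    (i.insertNth c (w + t • (w' - w)) : Fin (d + 1) → ℝ) =
      i.insertNth c w + t • ((i.insertNth c w' : Fin (d + 1) → ℝ) - i.insertNth c w) := by
  ext j
  refine Fin.succAboveCases i ?_ (fun j ↦ ?_) j <;> simp

theorem lintegral_lintegral_insertNth_le (i : Fin (d + 1)) {H : (Fin (d + 1) → ℝ) → ℝ≥0∞}
    (hH : Measurable H) {R : ℝ} {J : Set ℝ} (hJ : MeasurableSet J) (hJR : J ⊆ Icc (-R) R) :
    ∫⁻ c in J, ∫⁻ w in closedBall (0 : Fin d → ℝ) R, H (i.insertNth c w) ≤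
      ∫⁻ z in closedBall (0 : Fin (d + 1) → ℝ) R, H z := by
  have hins : Measurable fun p : ℝ × (Fin d → ℝ) ↦ (i.insertNth p.1 p.2 : Fin (d + 1) → ℝ) :=
    (MeasurableEquiv.piFinSuccAbove (fun _ : Fin (d + 1) ↦ ℝ) i).symm.measurable
  rw [← lintegral_prod (fun p : ℝ × (Fin d → ℝ) ↦ H (i.insertNth p.1 p.2))
      (hH.comp hins).aemeasurable, Measure.prod_restrict,
    ← lintegral_indicator measurableSet_closedBall,
    ← lintegral_indicator (hJ.prod measurableSet_closedBall),
    ← (volume_preserving_piFinSuccAbove (fun _ : Fin (d + 1) ↦ ℝ) i).symm.lintegral_comp_emb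
      (MeasurableEquiv.measurableEmbedding _)]
  refine lintegral_mono (indicator_le fun p hp ↦ le_of_eq ?_)
  exact (indicator_of_mem (insertNth_mem_closedBall i (hJR hp.1) hp.2) H).symm

theorem exists_mem_Icc_lintegral_insertNth_le (i : Fin (d + 1)) {H : (Fin (d + 1) → ℝ) → ℝ≥0∞}
    (hH : Measurable H) {R c₀ : ℝ} (hJR : Icc c₀ (c₀ + 1) ⊆ Icc (-R) R) :
    ∃ c ∈ Icc c₀ (c₀ + 1), ∫⁻ w in closedBall (0 : Fin d → ℝ) R, H (i.insertNth c w) ≤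
      ∫⁻ z in closedBall (0 : Fin (d + 1) → ℝ) R, H z := by
  have hins : Measurable fun p : ℝ × (Fin d → ℝ) ↦ (i.insertNth p.1 p.2 : Fin (d + 1) → ℝ) :=
    (MeasurableEquiv.piFinSuccAbove (fun _ : Fin (d + 1) ↦ ℝ) i).symm.measurable
  obtain ⟨c, hc, hle⟩ := exists_le_setLAverage (μ := volume) (s := Icc c₀ (c₀ + 1))
    (f := fun c ↦ ∫⁻ w in closedBall (0 : Fin d → ℝ) R, H (i.insertNth c w)) (by simp) (by simp)
    (hH.comp hins).lintegral_prod_right'.aemeasurable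
  refine ⟨c, hc, hle.trans ?_⟩
  rw [setLAverage_eq]
  simpa using lintegral_lintegral_insertNth_le i hH measurableSet_Icc hJR

/-- The constant in Morrey's inequality on the `d`-dimensional slices of the cube `[-2, 2]^(d+1)`,
in terms of the energy of the whole cube. -/
noncomputable def sliceConst (d : ℕ) (α : ℝ) : ℝ≥0∞ :=
  morreyConst d α * (4 ^ α / volume (closedBall (0 : Fin d → ℝ) 2))

theorem sliceConst_ne_top (d : ℕ) {α : ℝ} (hα : 0 ≤ α) : sliceConst d α ≠ ⊤ := by
  refine ENNReal.mul_ne_top (morreyConst_ne_top d hα) (ENNReal.div_ne_top ?_ ?_)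
  · exact ENNReal.rpow_ne_top_of_nonneg hα ENNReal.ofNat_ne_top
  · exact (measure_closedBall_pos _ _ two_pos).ne'

variable [NormedSpace ℝ F] [CompleteSpace F]

theorem enorm_sub_insertNth_rpow_le (hd : 1 ≤ d) (hα : d < α) {u : (Fin (d + 1) → ℝ) → F}
    (hu : ContDiff ℝ 1 u) (i : Fin (d + 1)) (c : ℝ) {w w' : Fin d → ℝ}
    (hw : w ∈ closedBall (0 : Fin d → ℝ) 2) (hw' : w' ∈ closedBall (0 : Fin d → ℝ) 2) :
    ‖u (i.insertNth c w) - u (i.insertNth c w')‖ₑ ^ α ≤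
      sliceConst d α *
        ∫⁻ z in closedBall (0 : Fin d → ℝ) 2, ‖fderiv ℝ u (i.insertNth c z)‖ₑ ^ α := by
  have hα0 : 0 < α := (Nat.cast_nonneg d).trans_lt hα
  have hα1 : 1 ≤ α := (Nat.one_le_cast.2 hd).trans hα.le
  set Q := closedBall (0 : Fin d → ℝ) 2
  set h : (Fin d → ℝ) → ℝ≥0∞ := fun z ↦ ‖fderiv ℝ u (i.insertNth c z)‖ₑ * 4
  have hins : Continuous fun z : Fin d → ℝ ↦ (i.insertNth c z : Fin (d + 1) → ℝ) :=
    continuous_const.finInsertNth i continuous_id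
  have hh : Measurable h :=
    ((hu.continuous_fderiv one_ne_zero).comp hins).enorm.measurable.mul_const _
  have hdiam {z z' : Fin d → ℝ} (hz : z ∈ Q) (hz' : z' ∈ Q) :
      ‖(i.insertNth c z : Fin (d + 1) → ℝ) - i.insertNth c z'‖ₑ ≤ 4 := by
    rw [← edist_eq_enorm_sub, ← ENNReal.ofReal_ofNat, edist_le_ofReal (by norm_num),
      dist_pi_le_iff (by norm_num), Fin.forall_iff_succAbove i]
    have hzz' : dist z z' ≤ 4 :=
      (dist_triangle_right z z' 0).trans (by linarith [mem_closedBall.1 hz, mem_closedBall.1 hz'])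
    exact ⟨by simp, fun j ↦ by simpa using (dist_le_pi_dist z z' j).trans hzz'⟩
  have hpath : ∀ x ∈ Q, ∀ z ∈ Q, ‖u (i.insertNth c z) - u (i.insertNth c x)‖ₑ ≤
      ∫⁻ t in Ioc (0 : ℝ) 1, h (x + t • (z - x)) := fun x hx z hz ↦ by
    refine (enorm_sub_le_lintegral_enorm_fderiv hu _ _).trans (lintegral_mono fun t ↦ ?_)
    simp only [h, insertNth_add_smul_sub]
    gcongr
    exact hdiam hz hx
  have hmorrey := enorm_sub_rpow_le_morreyConst_mul (μ := volume) (convex_closedBall _ _)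
    measurableSet_closedBall (measure_closedBall_pos _ _ two_pos).ne' measure_closedBall_lt_top.ne
    hα1 (by simpa using hα) hh hpath hw hw'
  refine hmorrey.trans (le_of_eq ?_)
  have hpow (z : Fin d → ℝ) : h z ^ α = 4 ^ α * ‖fderiv ℝ u (i.insertNth c z)‖ₑ ^ α := by
    rw [ENNReal.mul_rpow_of_nonneg _ _ hα0.le, mul_comm]
  have h4 : (4 : ℝ≥0∞) ^ α ≠ ⊤ := ENNReal.rpow_ne_top_of_nonneg hα0.le ENNReal.ofNat_ne_top
  simp only [hpow, setLAverage_eq, lintegral_const_mul' _ _ h4, Module.finrank_fin_fun, sliceConst]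
  rw [ENNReal.mul_div_right_comm, mul_assoc]

theorem exists_slice_enorm_sub_rpow_le (hd : 1 ≤ d) (hα : d < α) {u : (Fin (d + 1) → ℝ) → F}
    (hu : ContDiff ℝ 1 u) (i : Fin (d + 1)) {c₀ : ℝ} (hc₀ : Icc c₀ (c₀ + 1) ⊆ Icc (-2) 2) :
    ∃ c ∈ Icc c₀ (c₀ + 1), ∀ w ∈ closedBall (0 : Fin d → ℝ) 2, ∀ w' ∈ closedBall (0 : Fin d → ℝ) 2,
      ‖u (i.insertNth c w) - u (i.insertNth c w')‖ₑ ^ α ≤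
        sliceConst d α * ∫⁻ z in closedBall (0 : Fin (d + 1) → ℝ) 2, ‖fderiv ℝ u z‖ₑ ^ α := by
  obtain ⟨c, hc, hle⟩ := exists_mem_Icc_lintegral_insertNth_le i
    ((hu.continuous_fderiv one_ne_zero).enorm.measurable.pow_const α) hc₀
  exact ⟨c, hc, fun w hw w' hw' ↦
    (enorm_sub_insertNth_rpow_le hd hα hu i c hw hw').trans (mul_le_mul_right hle _)⟩

end Slice

section SmoothApprox

/-- `f` is a uniform limit on `B` of `C¹` maps whose `α`-energy on `B` is at most `I`. For
continuous maps this is the only consequence of Sobolev regularity that the oscillation estimate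
uses, and it behaves well under changes of scale. -/
def HasSmoothApprox {E F : Type*} [NormedAddCommGroup E] [NormedSpace ℝ E] [MeasureSpace E]
    [NormedAddCommGroup F] [NormedSpace ℝ F] (α : ℝ) (f : E → F) (B : Set E) (I : ℝ≥0∞) : Prop :=
  ∀ η : ℝ, 0 < η → ∃ u : E → F, ContDiff ℝ 1 u ∧ (∀ y ∈ B, dist (u y) (f y) ≤ η) ∧
    ∫⁻ y in B, ‖fderiv ℝ u y‖ₑ ^ α ≤ I

variable {d : ℕ} {F : Type*} [NormedAddCommGroup F] [NormedSpace ℝ F] {α : ℝ} {I : ℝ≥0∞}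

theorem HasSmoothApprox.exists_seq {E : Type*} [NormedAddCommGroup E] [NormedSpace ℝ E]
    [MeasureSpace E] {f : E → F} {B : Set E} (hf : HasSmoothApprox α f B I) :
    ∃ u : ℕ → E → F, (∀ k, ContDiff ℝ 1 (u k)) ∧ TendstoUniformlyOn u f atTop B ∧
      ∀ k, ∫⁻ y in B, ‖fderiv ℝ (u k) y‖ₑ ^ α ≤ I := by
  choose u hu hclose henergy using fun k : ℕ ↦ hf (1 / (k + 1)) Nat.one_div_pos_of_nat
  refine ⟨u, hu, Metric.tendstoUniformlyOn_iff.2 fun ε hε ↦ ?_, henergy⟩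
  filter_upwards [tendsto_one_div_add_atTop_nhds_zero_nat.eventually (gt_mem_nhds hε)]
    with k hk y hy
  rw [dist_comm]
  exact (hclose k y hy).trans_lt hk

theorem HasSmoothApprox.exists_slice_enorm_sub_rpow_le [CompleteSpace F] (hd : 1 ≤ d) (hα : d < α)
    {f : (Fin (d + 1) → ℝ) → F} (hf : HasSmoothApprox α f (closedBall 0 2) I)
    (hfc : ContinuousOn f (closedBall 0 2)) (i : Fin (d + 1)) {c₀ : ℝ}
    (hc₀ : Icc c₀ (c₀ + 1) ⊆ Icc (-2) 2) :
    ∃ c ∈ Icc c₀ (c₀ + 1), ∀ w ∈ closedBall (0 : Fin d → ℝ) 2, ∀ w' ∈ closedBall (0 : Fin d → ℝ) 2,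
      ‖f (i.insertNth c w) - f (i.insertNth c w')‖ₑ ^ α ≤ sliceConst d α * I := by
  obtain ⟨u, hu, hlim, henergy⟩ := hf.exists_seq
  choose c hc hcu using fun k ↦ _root_.exists_slice_enorm_sub_rpow_le hd hα (hu k) i hc₀
  obtain ⟨a, ha, φ, hφ, hcφ⟩ := isCompact_Icc.tendsto_subseq hc
  have hvalue (w : Fin d → ℝ) (hw : w ∈ closedBall (0 : Fin d → ℝ) 2) :
      Tendsto (fun k ↦ u (φ k) (i.insertNth (c (φ k)) w)) atTop (𝓝 (f (i.insertNth a w))) := by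
    have hins : Tendsto (fun k ↦ (i.insertNth (c (φ k)) w : Fin (d + 1) → ℝ)) atTop
        (𝓝[closedBall 0 2] i.insertNth a w) :=
      tendsto_nhdsWithin_iff.2 ⟨hcφ.finInsertNth i tendsto_const_nhds,
        .of_forall fun k ↦ insertNth_mem_closedBall i (hc₀ (hc (φ k))) hw⟩
    exact tendsto_comp_of_locally_uniform_limit_within
      (hfc _ (insertNth_mem_closedBall i (hc₀ ha) hw)) hins fun s hs ↦
        ⟨_, self_mem_nhdsWithin, hφ.tendsto_atTop.eventually (hlim s hs)⟩
  refine ⟨a, ha, fun w hw w' hw' ↦ le_of_tendsto'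
    ((ENNReal.continuous_rpow_const.tendsto _).comp ((hvalue w hw).sub (hvalue w' hw')).enorm)
    fun k ↦ (hcu (φ k) w hw w' hw').trans (mul_le_mul_right (henergy (φ k)) _)⟩

end SmoothApprox

section MaximumPrinciple

variable {F : Type*} [NormedAddCommGroup F] [NormedSpace ℝ F] [Nontrivial F]

theorem exists_mem_norm_sub_lt_of_isOpen {V : Set F} (hV : IsOpen V) {a : F} (ha : a ∈ V) (b : F) :
    ∃ y ∈ V, ‖a - b‖ < ‖y - b‖ := by
  obtain ⟨e, he⟩ : ∃ e : F, ∀ t : ℝ, 0 < t → ‖a - b‖ < ‖a + t • e - b‖ := by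
    rcases eq_or_ne a b with rfl | hab
    · obtain ⟨e, he⟩ := exists_ne (0 : F)
      exact ⟨e, fun t ht ↦ by simp [norm_smul, ht.ne', he]⟩
    · refine ⟨a - b, fun t ht ↦ ?_⟩
      have hpos : 0 < ‖a - b‖ := norm_pos_iff.2 (sub_ne_zero.2 hab)
      rw [show a + t • (a - b) - b = (1 + t) • (a - b) by module, norm_smul,
        Real.norm_of_nonneg (by positivity)]
      nlinarith
  have hlim : Tendsto (fun t : ℝ ↦ a + t • e) (𝓝[>] 0) (𝓝 a) := by
    have hcont : Continuous fun t : ℝ ↦ a + t • e := by fun_prop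
    simpa using (hcont.tendsto 0).mono_left nhdsWithin_le_nhds
  obtain ⟨t, htV, ht⟩ := ((hlim.eventually (hV.mem_nhds ha)).and self_mem_nhdsWithin).exists
  exact ⟨_, htV, he t ht⟩

theorem edist_le_of_isOpen_image_interior {X : Type*} [TopologicalSpace X] {f : X → F} {K : Set X}
    (hK : IsCompact K) (hf : ContinuousOn f K) (hopen : IsOpen (f '' interior K)) {b : ℝ≥0∞}
    (hb : ∀ z ∈ K \ interior K, ∀ z' ∈ K \ interior K, edist (f z) (f z') ≤ b)
    {p q : X} (hp : p ∈ K) (hq : q ∈ K) : edist (f p) (f q) ≤ b := by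
  have hcont : ContinuousOn (fun y : X × X ↦ ‖f y.1 - f y.2‖) (K ×ˢ K) :=
    ((hf.comp continuousOn_fst fun _ hy ↦ hy.1).sub
      (hf.comp continuousOn_snd fun _ hy ↦ hy.2)).norm
  obtain ⟨⟨z, z'⟩, ⟨hz, hz'⟩, hmax⟩ := (hK.prod hK).exists_isMaxOn ⟨(p, p), hp, hp⟩ hcont
  have hle {w w' : X} (hw : w ∈ K) (hw' : w' ∈ K) : ‖f w - f w'‖ ≤ ‖f z - f z'‖ :=
    hmax (mk_mem_prod hw hw')
  have hz_bdry : z ∉ interior K := fun hzi ↦ by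
    obtain ⟨_, ⟨w, hw, rfl⟩, hlt⟩ :=
      exists_mem_norm_sub_lt_of_isOpen hopen (mem_image_of_mem f hzi) (f z')
    exact (hle (interior_subset hw) hz').not_gt hlt
  have hz'_bdry : z' ∉ interior K := fun hzi ↦ by
    obtain ⟨_, ⟨w, hw, rfl⟩, hlt⟩ :=
      exists_mem_norm_sub_lt_of_isOpen hopen (mem_image_of_mem f hzi) (f z)
    rw [norm_sub_rev, norm_sub_rev (f w)] at hlt
    exact (hle hz (interior_subset hw)).not_gt hlt
  calc edist (f p) (f q) ≤ edist (f z) (f z') := by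
        rw [edist_eq_enorm_sub, edist_eq_enorm_sub]
        exact enorm_le_iff_norm_le.2 (hle hp hq)
    _ ≤ b := hb z ⟨hz, hz_bdry⟩ z' ⟨hz', hz'_bdry⟩

end MaximumPrinciple

section Box

variable {ι : Type*} {a b : ι → ℝ}

theorem exists_eq_of_mem_Icc_diff_interior [Finite ι] {z : ι → ℝ}
    (hz : z ∈ Icc a b \ interior (Icc a b)) : ∃ i, z i = a i ∨ z i = b i := by
  by_contra! hne
  refine hz.2 (mem_interior.2 ⟨pi univ fun i ↦ Ioo (a i) (b i), fun w hw ↦ ?_,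
    isOpen_set_pi finite_univ fun i _ ↦ isOpen_Ioo, fun i _ ↦ ?_⟩)
  · exact ⟨fun i ↦ (hw i trivial).1.le, fun i ↦ (hw i trivial).2.le⟩
  · exact ⟨(hz.1.1 i).lt_of_ne (hne i).1.symm, (hz.1.2 i).lt_of_ne (hne i).2⟩

theorem update_mem_Icc {z : ι → ℝ} (hz : z ∈ Icc a b) {k : ι} {t : ℝ} (ht : t ∈ Icc (a k) (b k)) :
    Function.update z k t ∈ Icc a b :=
  ⟨le_update_iff.2 ⟨ht.1, fun i _ ↦ hz.1 i⟩, update_le_iff.2 ⟨ht.2, fun i _ ↦ hz.2 i⟩⟩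

-- Two points on different faces are joined through a point common to both; two points on one face
-- or on opposite faces are joined through an adjacent face.
theorem edist_le_three_mul_of_faces [Nontrivial ι] {Y : Type*} [PseudoEMetricSpace Y]
    {f : (ι → ℝ) → Y} {B : ℝ≥0∞}
    (hface : ∀ z ∈ Icc a b, ∀ z' ∈ Icc a b, ∀ i,
      z i = z' i → (z i = a i ∨ z i = b i) → edist (f z) (f z') ≤ B)
    {z z' : ι → ℝ} (hz : z ∈ Icc a b) (hz' : z' ∈ Icc a b) {i j : ι}
    (hi : z i = a i ∨ z i = b i) (hj : z' j = a j ∨ z' j = b j) :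
    edist (f z) (f z') ≤ 3 * B := by
  rcases eq_or_ne i j with rfl | hij
  · obtain ⟨k, hk⟩ := exists_ne i
    have hbk : b k ∈ Icc (a k) (b k) := ⟨(hz.1 k).trans (hz.2 k), le_rfl⟩
    have hup := update_mem_Icc hz hbk
    have hup' := update_mem_Icc hz' hbk
    calc edist (f z) (f z') ≤ _ := edist_triangle4 _ (f (Function.update z k (b k)))
          (f (Function.update z' k (b k))) _
      _ ≤ B + B + B := add_le_add_three
          (hface _ hz _ hup i (by simp [hk.symm]) hi)
          (hface _ hup _ hup' k (by simp) (by simp))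
          (hface _ hup' _ hz' i (by simp [hk.symm]) (by simpa [hk.symm] using hj))
      _ = 3 * B := by ring
  · have hup := update_mem_Icc hz (k := j) ⟨hz'.1 j, hz'.2 j⟩
    calc edist (f z) (f z') ≤ _ := edist_triangle _ (f (Function.update z j (z' j))) _
      _ ≤ B + B := add_le_add (hface _ hz _ hup i (by simp [hij]) hi)
          (hface _ hup _ hz' j (by simp) (by simpa using hj))
      _ ≤ 3 * B := by rw [← two_mul]; gcongr; norm_num

end Box

section Oscillation

variable {d : ℕ} {F : Type*} [NormedAddCommGroup F] [NormedSpace ℝ F] [CompleteSpace F]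
  {α : ℝ} {I : ℝ≥0∞}

theorem HasSmoothApprox.exists_hyperplane_edist_rpow_le (hd : 1 ≤ d) (hα : d < α)
    {f : (Fin (d + 1) → ℝ) → F} (hf : HasSmoothApprox α f (closedBall 0 2) I)
    (hfc : ContinuousOn f (closedBall 0 2)) (i : Fin (d + 1)) {c₀ : ℝ}
    (hc₀ : Icc c₀ (c₀ + 1) ⊆ Icc (-2) 2) :
    ∃ c ∈ Icc c₀ (c₀ + 1), ∀ z ∈ closedBall (0 : Fin (d + 1) → ℝ) 2,
      ∀ z' ∈ closedBall (0 : Fin (d + 1) → ℝ) 2, z i = c → z' i = c →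
        edist (f z) (f z') ^ α ≤ sliceConst d α * I := by
  obtain ⟨c, hc, hle⟩ := hf.exists_slice_enorm_sub_rpow_le hd hα hfc i hc₀
  have hremove {z : Fin (d + 1) → ℝ} (hz : z ∈ closedBall (0 : Fin (d + 1) → ℝ) 2) :
      i.removeNth z ∈ closedBall (0 : Fin d → ℝ) 2 := by
    rw [mem_closedBall, dist_pi_le_iff zero_le_two] at hz ⊢
    exact fun j ↦ hz _
  refine ⟨c, hc, fun z hz z' hz' hzi hzi' ↦ ?_⟩
  have hzz' := hle _ (hremove hz) _ (hremove hz')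
  have hins := i.insertNth_self_removeNth z
  have hins' := i.insertNth_self_removeNth z'
  rw [hzi] at hins
  rw [hzi'] at hins'
  rwa [hins, hins', ← edist_eq_enorm_sub] at hzz'

-- The faces of a box between the cubes of half-sides `1` and `2` are chosen so that `f` oscillates
-- little on each of them; being open, `f` has its largest oscillation on the boundary of that box.
theorem HasSmoothApprox.edist_rpow_le_of_isOpen_image [Nontrivial F] (hd : 1 ≤ d) (hα : d < α)
    {f : (Fin (d + 1) → ℝ) → F} (hf : HasSmoothApprox α f (closedBall 0 2) I)
    (hfc : ContinuousOn f (closedBall 0 2))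
    (hopen : ∀ U ⊆ closedBall 0 2, IsOpen U → IsOpen (f '' U)) {p q : Fin (d + 1) → ℝ}
    (hp : p ∈ closedBall 0 1) (hq : q ∈ closedBall 0 1) :
    edist (f p) (f q) ^ α ≤ 3 ^ α * (sliceConst d α * I) := by
  have hα0 : 0 < α := (Nat.cast_nonneg d).trans_lt hα
  have : Nontrivial (Fin (d + 1)) := Fin.nontrivial_iff_two_le.2 (by omega)
  choose a ha hfa using fun i ↦ hf.exists_hyperplane_edist_rpow_le hd hα hfc i
    (c₀ := -2) (Icc_subset_Icc le_rfl (by norm_num))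
  choose b hb hfb using fun i ↦ hf.exists_hyperplane_edist_rpow_le hd hα hfc i
    (c₀ := 1) (Icc_subset_Icc (by norm_num) (by norm_num))
  have hbox : Icc a b ⊆ closedBall 0 2 := fun z hz ↦ by
    rw [mem_closedBall, dist_zero_right, pi_norm_le_iff_of_nonneg zero_le_two]
    exact fun i ↦ abs_le.2 ⟨(ha i).1.trans (hz.1 i), (hz.2 i).trans (by linarith [(hb i).2])⟩
  have hunit : closedBall 0 1 ⊆ Icc a b := fun z hz ↦ by
    rw [mem_closedBall, dist_zero_right, pi_norm_le_iff_of_nonneg zero_le_one] at hz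
    exact ⟨fun i ↦ by linarith [(ha i).2, (abs_le.1 (hz i)).1],
      fun i ↦ (abs_le.1 (hz i)).2.trans (hb i).1⟩
  have hface : ∀ z ∈ Icc a b, ∀ z' ∈ Icc a b, ∀ i, z i = z' i → (z i = a i ∨ z i = b i) →
      edist (f z) (f z') ≤ (sliceConst d α * I) ^ (α⁻¹) := fun z hz z' hz' i hzz' hzi ↦ by
    rw [ENNReal.le_rpow_inv_iff hα0]
    rcases hzi with hzi | hzi
    · exact hfa i z (hbox hz) z' (hbox hz') hzi (hzz' ▸ hzi)
    · exact hfb i z (hbox hz) z' (hbox hz') hzi (hzz' ▸ hzi)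
  have hpq : edist (f p) (f q) ≤ 3 * (sliceConst d α * I) ^ (α⁻¹) := by
    refine edist_le_of_isOpen_image_interior isCompact_Icc (hfc.mono hbox)
      (hopen _ (interior_subset.trans hbox) isOpen_interior) (fun z hz z' hz' ↦ ?_)
      (hunit hp) (hunit hq)
    obtain ⟨i, hi⟩ := exists_eq_of_mem_Icc_diff_interior hz
    obtain ⟨j, hj⟩ := exists_eq_of_mem_Icc_diff_interior hz'
    exact edist_le_three_mul_of_faces hface hz.1 hz'.1 hi hj
  calc edist (f p) (f q) ^ α ≤ (3 * (sliceConst d α * I) ^ (α⁻¹)) ^ α :=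
        ENNReal.rpow_le_rpow hpq hα0.le
    _ = _ := by rw [ENNReal.mul_rpow_of_nonneg _ _ hα0.le, ENNReal.rpow_inv_rpow hα0.ne']

end Oscillation

section Mollification

theorem lintegral_rpow_lintegral_sub_mul_le {E : Type*} [AddCommGroup E] [MeasurableSpace E]
    [MeasurableAdd₂ E] [MeasurableNeg E] {μ : Measure E} [SFinite μ] [μ.IsAddLeftInvariant]
    [μ.IsNegInvariant] {α : ℝ} (hα : 1 ≤ α) {ρ h : E → ℝ≥0∞} (hρ : Measurable ρ)
    (hρ1 : ∫⁻ z, ρ z ∂μ = 1) (hh : AEMeasurable h μ) :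
    ∫⁻ y, (∫⁻ z, ρ (y - z) * h z ∂μ) ^ α ∂μ ≤ ∫⁻ z, h z ^ α ∂μ := by
  have hρy (y : E) : Measurable fun z ↦ ρ (y - z) := hρ.comp (measurable_id.const_sub y)
  have hjensen (y : E) : (∫⁻ z, ρ (y - z) * h z ∂μ) ^ α ≤ ∫⁻ z, ρ (y - z) * h z ^ α ∂μ := by
    have hprob : IsProbabilityMeasure (μ.withDensity fun z ↦ ρ (y - z)) :=
      ⟨by rw [withDensity_apply _ .univ, setLIntegral_univ, lintegral_sub_left_eq_self ρ, hρ1]⟩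
    have hac : μ.withDensity (fun z ↦ ρ (y - z)) ≪ μ := withDensity_absolutelyContinuous _ _
    have := rpow_laverage_le_laverage_rpow hα (hh.mono_ac hac)
    simpa only [laverage_eq_lintegral,
      lintegral_withDensity_eq_lintegral_mul₀ (hρy y).aemeasurable hh,
      lintegral_withDensity_eq_lintegral_mul₀ (hρy y).aemeasurable (hh.pow_const α),
      Pi.mul_apply] using this
  calc ∫⁻ y, (∫⁻ z, ρ (y - z) * h z ∂μ) ^ α ∂μ
      ≤ ∫⁻ y, ∫⁻ z, ρ (y - z) * h z ^ α ∂μ ∂μ := lintegral_mono hjensen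
    _ = ∫⁻ z, ∫⁻ y, ρ (y - z) * h z ^ α ∂μ ∂μ := lintegral_lintegral_swap
        ((hρ.comp (measurable_fst.sub measurable_snd)).aemeasurable.mul (hh.pow_const α).comp_snd)
    _ = ∫⁻ z, h z ^ α ∂μ := by
      refine lintegral_congr fun z ↦ ?_
      rw [lintegral_mul_const _ (by fun_prop : Measurable fun y ↦ ρ (y - z)),
        lintegral_sub_right_eq_self ρ, hρ1, one_mul]

variable {n m : ℕ} {D K : Set (Eucl n)} {f : Eucl n → Eucl m} {Df : Eucl n → Eucl n →L[ℝ] Eucl m}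

theorem IsWeakDerivOn.integrable_indicator (hw : IsWeakDerivOn D f Df) (hK : IsCompact K)
    (hKD : K ⊆ D) : Integrable (K.indicator f) ∧ Integrable (K.indicator Df) :=
  ⟨(integrable_indicator_iff hK.measurableSet).2 (hw.1.integrableOn_compact_subset hKD hK),
    (integrable_indicator_iff (f := Df) hK.measurableSet).2
      (hw.2.1.integrableOn_compact_subset hKD hK)⟩

theorem IsWeakDerivOn.integral_fderiv_comp_sub (hw : IsWeakDerivOn D f Df) {g : Eucl n → ℝ}
    (hg : ContDiff ℝ (⊤ : ℕ∞) g) (hgc : HasCompactSupport g) {y : Eucl n}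
    (hgD : tsupport (fun z ↦ g (y - z)) ⊆ D) (v : Eucl n) :
    ∫ z, fderiv ℝ g (y - z) v • f z = ∫ z, g (y - z) • Df z v := by
  have hψ : ContDiff ℝ (⊤ : ℕ∞) fun z ↦ g (y - z) := hg.comp (contDiff_const.sub contDiff_id)
  have hfderiv (z : Eucl n) : fderiv ℝ (fun z ↦ g (y - z)) z = -fderiv ℝ g (y - z) := by
    have hgz := (hg.differentiable (by simp) (y - z)).hasFDerivAt.comp z
      ((hasFDerivAt_id z).const_sub y)
    exact hgz.fderiv.trans (by simp)
  rw [hw.2.2 _ hψ (hgc.comp_homeomorph (Homeomorph.subLeft y)) hgD, ← integral_neg]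
  simp only [hfderiv, neg_apply, neg_smul, neg_neg]

theorem IsWeakDerivOn.fderiv_convolution_indicator (hw : IsWeakDerivOn D f Df) (hK : IsCompact K)
    (hKD : K ⊆ D) {g : Eucl n → ℝ} (hg : ContDiff ℝ (⊤ : ℕ∞) g) (hgc : HasCompactSupport g)
    {y : Eucl n} (hgK : ∀ z, y - z ∈ tsupport g → z ∈ K) :
    fderiv ℝ (convolution g (K.indicator f) (ContinuousLinearMap.lsmul ℝ ℝ) volume) y =
      ∫ z, g (y - z) • K.indicator Df z := by
  obtain ⟨hfK, hDfK⟩ := hw.integrable_indicator hK hKD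
  have hg1 : ContDiff ℝ 1 g := hg.of_le (by exact_mod_cast le_top)
  have hψK : tsupport (fun z ↦ g (y - z)) ⊆ K :=
    closure_minimal (fun z hz ↦ hgK z (subset_tsupport _ hz)) hK.isClosed
  have hderiv := hgc.hasFDerivAt_convolution_left (ContinuousLinearMap.lsmul ℝ ℝ) hg1
    hfK.locallyIntegrable y
  have hint : Integrable fun z ↦ (ContinuousLinearMap.precompL (Eucl n)
      (ContinuousLinearMap.lsmul ℝ ℝ : ℝ →L[ℝ] Eucl m →L[ℝ] Eucl m)) (fderiv ℝ g (y - z))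
        (K.indicator f z) :=
    (HasCompactSupport.convolutionExists_left _ (hgc.fderiv ℝ)
      (hg1.continuous_fderiv one_ne_zero) hfK.locallyIntegrable y).integrable_swap
  have hint' : Integrable fun z ↦ g (y - z) • K.indicator Df z :=
    hDfK.locallyIntegrable.integrable_smul_left_of_hasCompactSupport
      (hg.continuous.comp (continuous_const.sub continuous_id))
      (hgc.comp_homeomorph (Homeomorph.subLeft y))
  ext1 v
  rw [ContinuousLinearMap.integral_apply hint', hderiv.fderiv, convolution_eq_swap,
    ContinuousLinearMap.integral_apply hint]
  calc _ = ∫ z, fderiv ℝ g (y - z) v • f z := by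
        refine integral_congr_ae (.of_forall fun z ↦ ?_)
        by_cases hz : z ∈ K
        · simp [hz]
        · have : fderiv ℝ g (y - z) = 0 :=
            Function.notMem_support.1 fun h ↦ hz (hgK z (support_fderiv_subset ℝ h))
          simp [this]
    _ = ∫ z, g (y - z) • Df z v := hw.integral_fderiv_comp_sub hg hgc (hψK.trans hKD) v
    _ = _ := by
        refine integral_congr_ae (.of_forall fun z ↦ ?_)
        by_cases hz : z ∈ K
        · simp [hz]
        · have : g (y - z) = 0 := Function.notMem_support.1 fun h ↦ hz (hgK z (subset_tsupport _ h))
          simp [this]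

theorem IsWeakDerivOn.lintegral_fderiv_convolution_rpow_le (hw : IsWeakDerivOn D f Df)
    (hK : IsCompact K) (hKD : K ⊆ D) {g : Eucl n → ℝ} (hg : ContDiff ℝ (⊤ : ℕ∞) g)
    (hgc : HasCompactSupport g) (hg0 : ∀ z, 0 ≤ g z) (hg1 : ∫ z, g z = 1) {α : ℝ} (hα : 1 ≤ α)
    {B : Set (Eucl n)} (hB : MeasurableSet B) (hBK : ∀ y ∈ B, ∀ z, y - z ∈ tsupport g → z ∈ K) :
    ∫⁻ y in B, ‖fderiv ℝ (convolution g (K.indicator f) (ContinuousLinearMap.lsmul ℝ ℝ) volume) y‖ₑ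
      ^ α ≤ ∫⁻ z in K, ‖Df z‖ₑ ^ α := by
  have hα0 : 0 < α := zero_lt_one.trans_le hα
  have hmass : ∫⁻ z, ‖g z‖ₑ = 1 := by
    simp_rw [Real.enorm_eq_ofReal (hg0 _)]
    rw [← ofReal_integral_eq_lintegral_ofReal
      (hg.continuous.integrable_of_hasCompactSupport hgc) (.of_forall hg0), hg1, ENNReal.ofReal_one]
  calc _ ≤ ∫⁻ y in B, (∫⁻ z, ‖g (y - z)‖ₑ * ‖K.indicator Df z‖ₑ) ^ α := by
        refine setLIntegral_mono' hB fun y hy ↦ ENNReal.rpow_le_rpow ?_ hα0.le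
        rw [hw.fderiv_convolution_indicator hK hKD hg hgc (hBK y hy)]
        simpa only [enorm_smul] using
          enorm_integral_le_lintegral_enorm fun z ↦ g (y - z) • K.indicator Df z
    _ ≤ ∫⁻ y, (∫⁻ z, ‖g (y - z)‖ₑ * ‖K.indicator Df z‖ₑ) ^ α := setLIntegral_le_lintegral _ _
    _ ≤ ∫⁻ z, ‖K.indicator Df z‖ₑ ^ α :=
        lintegral_rpow_lintegral_sub_mul_le hα hg.continuous.enorm.measurable hmass
          (hw.integrable_indicator hK hKD).2.aestronglyMeasurable.enorm
    _ = ∫⁻ z in K, ‖Df z‖ₑ ^ α := by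
        rw [← lintegral_indicator hK.measurableSet]
        refine lintegral_congr fun z ↦ ?_
        by_cases hz : z ∈ K
        · rw [indicator_of_mem hz, indicator_of_mem hz]
        · have hzero : ‖K.indicator Df z‖ₑ = 0 := by
            rw [indicator_of_notMem hz Df]
            exact enorm_zero (E := Eucl n →L[ℝ] Eucl m)
          rw [hzero, indicator_of_notMem hz, ENNReal.zero_rpow_of_pos hα0]

theorem IsWeakDerivOn.hasSmoothApprox_closedBall (hw : IsWeakDerivOn D f Df)
    (hf : ContinuousOn f D) {α : ℝ} (hα : 1 ≤ α) {x : Eucl n} {R R' : ℝ} (hR : R < R')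
    (hD : closedBall x R' ⊆ D) :
    HasSmoothApprox α f (closedBall x R) (∫⁻ y in closedBall x R', ‖Df y‖ₑ ^ α) := by
  intro η hη
  set K := closedBall x R'
  have hK : IsCompact K := isCompact_closedBall _ _
  have hfK : Integrable (K.indicator f) := (hw.integrable_indicator hK hD).1
  obtain ⟨δ, hδ, hfδ⟩ := Metric.uniformContinuousOn_iff_le.1
    (hK.uniformContinuousOn_of_continuous (hf.mono hD)) η hη
  set r : ℝ := min δ (R' - R)
  have hr : 0 < r := lt_min hδ (sub_pos.2 hR)
  let φ : ContDiffBump (0 : Eucl n) := ⟨r / 2, r, half_pos hr, half_lt_self hr⟩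
  have hφK : ∀ y ∈ closedBall x R, ∀ z, dist z y ≤ r → z ∈ K := fun y hy z hz ↦ by
    have hrR : r ≤ R' - R := min_le_right _ _
    exact (dist_triangle z y x).trans (by linarith [mem_closedBall.1 hy])
  refine ⟨convolution (φ.normed volume) (K.indicator f) (ContinuousLinearMap.lsmul ℝ ℝ) volume,
    ?_, fun y hy ↦ ?_, ?_⟩
  · exact_mod_cast HasCompactSupport.contDiff_convolution_left (n := 1) _
      φ.hasCompactSupport_normed φ.contDiff_normed hfK.locallyIntegrable
  · have hyK : y ∈ K := closedBall_subset_closedBall hR.le hy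
    rw [← indicator_of_mem hyK f]
    refine φ.dist_normed_convolution_le hfK.aestronglyMeasurable fun z hz ↦ ?_
    have hzr : dist z y ≤ r := (mem_ball.1 hz).le
    have hzK : z ∈ K := hφK y hy z hzr
    rw [indicator_of_mem hzK, indicator_of_mem hyK]
    exact hfδ z hzK y hyK (hzr.trans (min_le_left _ _))
  · refine hw.lintegral_fderiv_convolution_rpow_le hK hD φ.contDiff_normed
      φ.hasCompactSupport_normed φ.nonneg_normed φ.integral_normed hα measurableSet_closedBall
      fun y hy z hz ↦ hφK y hy z ?_
    rw [φ.tsupport_normed_eq, mem_closedBall_zero_iff, ← dist_eq_norm, dist_comm] at hz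
    exact hz

end Mollification

section OscillationBound

theorem HasSmoothApprox.comp_add_smul {E E' F : Type*} [NormedAddCommGroup E] [NormedSpace ℝ E]
    [MeasureSpace E] [NormedAddCommGroup E'] [NormedSpace ℝ E'] [MeasureSpace E'] [BorelSpace E']
    [FiniteDimensional ℝ E'] [(volume : Measure E').IsAddHaarMeasure] [BorelSpace E]
    [NormedAddCommGroup F] [NormedSpace ℝ F] {α : ℝ} (hα : 0 ≤ α) {f : E' → F} {B : Set E}
    {B' : Set E'} (hB : MeasurableSet B) (hB' : MeasurableSet B') {I : ℝ≥0∞}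
    (hf : HasSmoothApprox α f B' I) (L : E ≃L[ℝ] E') (hL : MeasurePreserving L volume volume)
    (x : E') {s : ℝ} (hs : 0 < s) (hmaps : MapsTo (fun z ↦ x + s • L z) B B') :
    HasSmoothApprox α (fun z ↦ f (x + s • L z)) B
      ((ENNReal.ofReal s * ‖(L : E →L[ℝ] E')‖ₑ) ^ α *
        (ENNReal.ofReal ((s ^ Module.finrank ℝ E')⁻¹) * I)) := by
  intro η hη
  obtain ⟨u, hu, hclose, henergy⟩ := hf η hη
  refine ⟨fun z ↦ u (x + s • L z),
    hu.comp (contDiff_const.add (contDiff_const.smul L.contDiff)),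
    fun z hz ↦ hclose _ (hmaps hz), ?_⟩
  have hfderiv (z : E) : ‖fderiv ℝ (fun z ↦ u (x + s • L z)) z‖ₑ ≤
      ‖fderiv ℝ u (x + s • L z)‖ₑ * (ENNReal.ofReal s * ‖(L : E →L[ℝ] E')‖ₑ) := by
    have hchart : HasFDerivAt (fun z ↦ x + s • L z) (s • (L : E →L[ℝ] E')) z :=
      (L.hasFDerivAt.const_smul s).const_add x
    have hcomp := ((hu.differentiable one_ne_zero _).hasFDerivAt.comp z hchart).fderiv
    rw [Function.comp_def] at hcomp
    rw [hcomp, ← Real.enorm_of_nonneg hs.le, ← enorm_smul]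
    exact ContinuousLinearMap.opENorm_comp_le _ _
  set G : E' → ℝ≥0∞ := B'.indicator fun y ↦ ‖fderiv ℝ u y‖ₑ ^ α with hG
  have hpow : (ENNReal.ofReal s * ‖(L : E →L[ℝ] E')‖ₑ) ^ α ≠ ⊤ :=
    ENNReal.rpow_ne_top_of_nonneg hα (ENNReal.mul_ne_top ENNReal.ofReal_ne_top enorm_ne_top)
  calc ∫⁻ z in B, ‖fderiv ℝ (fun z ↦ u (x + s • L z)) z‖ₑ ^ α
      ≤ ∫⁻ z in B, (ENNReal.ofReal s * ‖(L : E →L[ℝ] E')‖ₑ) ^ α * G (x + s • L z) := by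
        refine setLIntegral_mono' hB fun z hz ↦ ?_
        rw [hG, indicator_of_mem (hmaps hz), mul_comm, ← ENNReal.mul_rpow_of_nonneg _ _ hα]
        exact ENNReal.rpow_le_rpow (hfderiv z) hα
    _ ≤ ∫⁻ z, (ENNReal.ofReal s * ‖(L : E →L[ℝ] E')‖ₑ) ^ α * G (x + s • L z) :=
        setLIntegral_le_lintegral _ _
    _ = (ENNReal.ofReal s * ‖(L : E →L[ℝ] E')‖ₑ) ^ α * ∫⁻ y, G (x + s • y) := by
        rw [lintegral_const_mul' _ _ hpow, hL.lintegral_comp_emb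
          L.toHomeomorph.measurableEmbedding fun y ↦ G (x + s • y)]
    _ ≤ _ := by
        rw [lintegral_comp_add_smul G x hs, hG, lintegral_indicator hB']
        gcongr

/-- The oscillation of `f` on small balls is controlled by the mean of `g` over comparable balls,
in the way that Morrey's inequality provides with `g = ‖∇f‖ ^ α`. This Rado–Reichelderfer-type
condition gives both the differentiability of `f` and the Lusin property on spheres. -/
def HasOscillationBound {E F : Type*} [NormedAddCommGroup E] [MeasureSpace E]
    [PseudoEMetricSpace F] (D : Set E) (f : E → F) (g : E → ℝ≥0∞) (α : ℝ) : Prop :=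
  ∃ C : ℝ≥0∞, C ≠ ⊤ ∧ ∃ M : ℝ, 1 < M ∧ ∀ (x : E) (s : ℝ), 0 < s → closedBall x (M * s) ⊆ D →
    ediam (f '' closedBall x s) ^ α ≤
      C * (ENNReal.ofReal s ^ α * ⨍⁻ y in closedBall x (M * s), g y ∂volume)

theorem ofReal_inv_pow_mul_setLIntegral_closedBall {E : Type*} [NormedAddCommGroup E]
    [NormedSpace ℝ E] [FiniteDimensional ℝ E] [MeasurableSpace E] [BorelSpace E] {μ : Measure E}
    [μ.IsAddHaarMeasure] (g : E → ℝ≥0∞) (x : E) {s M : ℝ} (hs : 0 < s) (hM : 0 ≤ M) :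
    ENNReal.ofReal ((s ^ Module.finrank ℝ E)⁻¹) * ∫⁻ y in closedBall x (M * s), g y ∂μ =
      ENNReal.ofReal (M ^ Module.finrank ℝ E) * μ (ball 0 1) *
        ⨍⁻ y in closedBall x (M * s), g y ∂μ := by
  have hscale : (s ^ Module.finrank ℝ E)⁻¹ * (M * s) ^ Module.finrank ℝ E =
      M ^ Module.finrank ℝ E := by
    rw [mul_pow]
    field_simp
  rw [← measure_mul_setLAverage _ measure_closedBall_lt_top.ne,
    Measure.addHaar_closedBall μ x (by positivity), ← mul_assoc, ← mul_assoc,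
    ← ENNReal.ofReal_mul (by positivity), hscale]

theorem exists_add_smul_eq_of_mem_closedBall {E E' : Type*} [NormedAddCommGroup E]
    [NormedSpace ℝ E] [NormedAddCommGroup E'] [NormedSpace ℝ E'] (L : E ≃L[ℝ] E')
    (hL : LipschitzWith 1 L.symm) {x p : E'} {s : ℝ} (hs : 0 < s) (hp : p ∈ closedBall x s) :
    ∃ z ∈ closedBall (0 : E) 1, x + s • L z = p := by
  refine ⟨L.symm (s⁻¹ • (p - x)), ?_, by simp [hs.ne']⟩
  have hnorm := hL.norm_le_mul (map_zero _) (s⁻¹ • (p - x))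
  rw [mem_closedBall_zero_iff]
  refine hnorm.trans ?_
  rw [NNReal.coe_one, one_mul, norm_smul, norm_inv, Real.norm_of_nonneg hs.le,
    inv_mul_le_one₀ hs, ← dist_eq_norm]
  exact hp

theorem HasSmoothApprox.ediam_image_closedBall_rpow_le {d : ℕ} (hd : 1 ≤ d) {α : ℝ} (hα : d < α)
    {E F : Type*} [NormedAddCommGroup E] [NormedSpace ℝ E] [MeasureSpace E] [BorelSpace E]
    [FiniteDimensional ℝ E] [(volume : Measure E).IsAddHaarMeasure] [NormedAddCommGroup F]
    [NormedSpace ℝ F] [CompleteSpace F] [Nontrivial F] (L : (Fin (d + 1) → ℝ) ≃L[ℝ] E)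
    (hLvol : MeasurePreserving L) (hLsymm : LipschitzWith 1 L.symm) {f : E → F} {x : E} {s : ℝ}
    (hs : 0 < s) {B : Set E} (hB : closedBall x (2 * ‖(L : (Fin (d + 1) → ℝ) →L[ℝ] E)‖ * s) ⊆ B)
    (hBm : MeasurableSet B) (hfc : ContinuousOn f B) (hopen : ∀ U ⊆ B, IsOpen U → IsOpen (f '' U))
    {I : ℝ≥0∞} (hf : HasSmoothApprox α f B I) :
    ediam (f '' closedBall x s) ^ α ≤ 3 ^ α * (sliceConst d α *
      ((ENNReal.ofReal s * ‖(L : (Fin (d + 1) → ℝ) →L[ℝ] E)‖ₑ) ^ α *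
        (ENNReal.ofReal ((s ^ Module.finrank ℝ E)⁻¹) * I))) := by
  have hα0 : 0 < α := (Nat.cast_nonneg d).trans_lt hα
  set χ : (Fin (d + 1) → ℝ) → E := fun z ↦ x + s • L z
  have hχc : Continuous χ := by fun_prop
  have hχ : IsOpenMap χ := ((L.toHomeomorph.trans (Homeomorph.smulOfNeZero s hs.ne')).trans
    (Homeomorph.addLeft x)).isOpenMap
  have hmaps : MapsTo χ (closedBall 0 2) B := fun z hz ↦ hB <| by
    rw [mem_closedBall_zero_iff] at hz
    rw [mem_closedBall, dist_self_add_left, norm_smul, Real.norm_of_nonneg hs.le]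
    have := (L : (Fin (d + 1) → ℝ) →L[ℝ] E).le_opNorm_of_le hz
    calc s * ‖L z‖ ≤ s * (‖(L : (Fin (d + 1) → ℝ) →L[ℝ] E)‖ * 2) := by gcongr; exact this
      _ = _ := by ring
  have happrox := hf.comp_add_smul hα0.le measurableSet_closedBall hBm L hLvol x hs hmaps
  rw [← ENNReal.le_rpow_inv_iff hα0]
  refine ediam_le ?_
  rintro _ ⟨p, hp, rfl⟩ _ ⟨q, hq, rfl⟩
  rw [ENNReal.le_rpow_inv_iff hα0]
  obtain ⟨z, hz, rfl⟩ := exists_add_smul_eq_of_mem_closedBall L hLsymm hs hp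
  obtain ⟨w, hw, rfl⟩ := exists_add_smul_eq_of_mem_closedBall L hLsymm hs hq
  exact happrox.edist_rpow_le_of_isOpen_image hd hα (hfc.comp hχc.continuousOn hmaps)
    (fun U hU hUo ↦ image_image f χ U ▸ hopen _ (hmaps.mono_left hU).image_subset (hχ U hUo)) hz hw

theorem IsWeakDerivOn.hasOscillationBound {d m : ℕ} (hd : 1 ≤ d) {α : ℝ} (hα : d < α)
    [Nontrivial (Eucl m)] {D : Set (Eucl (d + 1))} {f : Eucl (d + 1) → Eucl m}
    {Df : Eucl (d + 1) → Eucl (d + 1) →L[ℝ] Eucl m} (hw : IsWeakDerivOn D f Df)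
    (hf : ContinuousOn f D) (hopen : ∀ U ⊆ D, IsOpen U → IsOpen (f '' U)) :
    HasOscillationBound D f (fun y ↦ ‖Df y‖ₑ ^ α) α := by
  have hα0 : 0 < α := (Nat.cast_nonneg d).trans_lt hα
  have hα1 : 1 ≤ α := (Nat.one_le_cast.2 hd).trans hα.le
  let L : (Fin (d + 1) → ℝ) ≃L[ℝ] Eucl (d + 1) := (PiLp.continuousLinearEquiv 2 ℝ _).symm
  set N : ℝ := ‖(L : (Fin (d + 1) → ℝ) →L[ℝ] Eucl (d + 1))‖
  have hN : 0 ≤ N := norm_nonneg _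
  have hpow {a : ℝ≥0∞} (ha : a ≠ ⊤) : a ^ α ≠ ⊤ := ENNReal.rpow_ne_top_of_nonneg hα0.le ha
  refine ⟨3 ^ α * (sliceConst d α * (ENNReal.ofReal N ^ α *
    (ENNReal.ofReal ((2 * N + 2) ^ (d + 1)) * volume (ball (0 : Eucl (d + 1)) 1)))),
    ENNReal.mul_ne_top (hpow (by simp)) (ENNReal.mul_ne_top (sliceConst_ne_top d hα0.le)
      (ENNReal.mul_ne_top (hpow ENNReal.ofReal_ne_top)
        (ENNReal.mul_ne_top ENNReal.ofReal_ne_top measure_ball_lt_top.ne))),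
    2 * N + 2, by linarith, fun x s hs hD ↦ ?_⟩
  have hlt : 2 * N * s < (2 * N + 2) * s := by nlinarith
  have hD' : closedBall x (2 * N * s) ⊆ D := (closedBall_subset_closedBall hlt.le).trans hD
  have hosc := (hw.hasSmoothApprox_closedBall hf hα1 hlt hD).ediam_image_closedBall_rpow_le hd hα L
    (PiLp.volume_preserving_toLp _) (PiLp.lipschitzWith_ofLp 2 _) hs Subset.rfl
    measurableSet_closedBall
    (hf.mono hD') fun U hU ↦ hopen U (hU.trans hD')
  rw [ofReal_inv_pow_mul_setLIntegral_closedBall _ x hs (by positivity)] at hosc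
  refine hosc.trans (le_of_eq ?_)
  rw [ENNReal.mul_rpow_of_nonneg _ _ hα0.le, finrank_euclideanSpace_fin, ← ofReal_norm]
  ring

end OscillationBound

section Stepanov

theorem ae_restrict_of_forall_mem_exists_nhds {X : Type*} [TopologicalSpace X]
    [SecondCountableTopology X] [MeasurableSpace X] {μ : Measure X} {s : Set X}
    (hs : MeasurableSet s) {P : X → Prop}
    (h : ∀ c ∈ s, ∃ V ∈ 𝓝 c, ∀ᵐ x ∂μ, x ∈ V → P x) : ∀ᵐ x ∂μ.restrict s, P x := by
  rw [ae_restrict_iff' hs, ae_iff]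
  refine measure_null_of_locally_null _ fun c hc ↦ ?_
  simp only [mem_ofPred_eq, Classical.not_imp] at hc
  obtain ⟨V, hV, hP⟩ := h c hc.1
  refine ⟨V ∩ {x | ¬(x ∈ s → P x)}, inter_comm V _ ▸ inter_mem_nhdsWithin _ hV,
    measure_mono_null ?_ (ae_iff.1 hP)⟩
  rintro x ⟨hxV, hx⟩ hVP
  exact hx fun _ ↦ hVP hxV

theorem ae_restrict_eventually_exists_dist_le {E : Type*} [NormedAddCommGroup E]
    [NormedSpace ℝ E] [FiniteDimensional ℝ E] [MeasurableSpace E] [BorelSpace E] (μ : Measure E)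
    [μ.IsAddHaarMeasure] (s : Set E) : ∀ᵐ x ∂μ.restrict s,
      ∀ ε > 0, ∀ᶠ y in 𝓝[≠] x, ∃ z ∈ s, dist z y ≤ ε * dist y x := by
  filter_upwards [ae_all_iff.2 fun k : ℕ ↦
    IsUnifLocDoublingMeasure.ae_tendsto_measure_inter_div μ s k] with x hx ε hε
  obtain ⟨k, hk⟩ := exists_nat_gt (1 / ε)
  have hkε : 1 ≤ k * ε := ((div_lt_iff₀ hε).1 hk).le
  have hδ : Tendsto (fun y ↦ ε * dist y x) (𝓝[≠] x) (𝓝[>] 0) := by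
    refine tendsto_nhdsWithin_iff.2 ⟨?_, ?_⟩
    · exact (Continuous.tendsto' (by fun_prop) x 0 (by simp)).mono_left nhdsWithin_le_nhds
    · filter_upwards [self_mem_nhdsWithin] with y hy using mul_pos hε (dist_pos.2 hy)
  have hmem : ∀ᶠ y in 𝓝[≠] x, x ∈ closedBall y (k * (ε * dist y x)) := .of_forall fun y ↦ by
    rw [mem_closedBall', ← mul_assoc]
    exact le_mul_of_one_le_left dist_nonneg hkε
  filter_upwards [(hx k (fun y ↦ y) _ hδ hmem).eventually (lt_mem_nhds one_pos)] with y hy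
  have hne : μ (s ∩ closedBall y (ε * dist y x)) ≠ 0 := fun h0 ↦ by simp [h0] at hy
  obtain ⟨z, hz, hzy⟩ := nonempty_of_measure_ne_zero hne
  exact ⟨z, hz, hzy⟩

variable {E F : Type*} [NormedAddCommGroup E] [NormedSpace ℝ E] [NormedAddCommGroup F]
  [NormedSpace ℝ F]

theorem hasFDerivAt_of_eventually_exists_dist_le {f : E → F} {L : E →L[ℝ] F}
    {s : Set E} {x : E} {k r : ℝ} (hr : 0 < r) (hk : 0 ≤ k)
    (hs : ∀ z ∈ s, ∀ y, dist y z < r → ‖f y - f z‖ ≤ k * ‖y - z‖)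
    (hL : HasFDerivWithinAt f L s x)
    (hdens : ∀ ε > 0, ∀ᶠ y in 𝓝[≠] x, ∃ z ∈ s, dist z y ≤ ε * dist y x) : HasFDerivAt f L x := by
  rw [hasFDerivAt_iff_isLittleO, Asymptotics.isLittleO_iff]
  intro c hc
  have hsum : 0 < k + ‖L‖ + 2 := by positivity
  obtain ⟨ε, hε, hε1, hεc⟩ : ∃ ε > 0, ε ≤ 1 ∧ ε * (k + ‖L‖ + 2) ≤ c :=
    ⟨min 1 (c / (k + ‖L‖ + 2)), by positivity, min_le_left _ _,
      (le_div_iff₀ hsum).1 (min_le_right _ _)⟩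
  obtain ⟨r', hr', hL'⟩ := Metric.eventually_nhds_iff.1 (eventually_nhdsWithin_iff.1
    (hL.isLittleO.def hε))
  filter_upwards [eventually_nhdsWithin_iff.1 (hdens ε hε), ball_mem_nhds x hr,
    ball_mem_nhds x (half_pos hr')] with y hy hyr hyr'
  rcases eq_or_ne y x with rfl | hyx
  · simp
  obtain ⟨z, hzs, hzy⟩ := hy hyx
  rw [mem_ball] at hyr hyr'
  have hzy' : dist z y ≤ dist y x := hzy.trans (mul_le_of_le_one_left dist_nonneg hε1)
  have hzx : dist z x ≤ 2 * dist y x := by linarith [dist_triangle z y x]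
  have hfyz : ‖f y - f z‖ ≤ k * (ε * ‖y - x‖) := by
    refine (hs z hzs y (by rw [dist_comm]; linarith)).trans ?_
    rw [norm_sub_rev, ← dist_eq_norm z, ← dist_eq_norm]
    gcongr
  have hfzx : ‖f z - f x - L (z - x)‖ ≤ ε * (2 * ‖y - x‖) := by
    refine (hL' (by linarith) hzs).trans ?_
    rw [← dist_eq_norm, ← dist_eq_norm]
    gcongr
  have hLzy : ‖L (z - y)‖ ≤ ‖L‖ * (ε * ‖y - x‖) :=
    L.le_of_opNorm_le_of_le le_rfl (by rwa [← dist_eq_norm, ← dist_eq_norm])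
  calc ‖f y - f x - L (y - x)‖ = ‖(f y - f z) + (f z - f x - L (z - x)) + L (z - y)‖ := by
        congr 1; simp only [map_sub]; abel
    _ ≤ k * (ε * ‖y - x‖) + ε * (2 * ‖y - x‖) + ‖L‖ * (ε * ‖y - x‖) :=
        norm_add₃_le.trans (by gcongr)
    _ = ε * (k + ‖L‖ + 2) * ‖y - x‖ := by ring
    _ ≤ c * ‖y - x‖ := by gcongr

variable [FiniteDimensional ℝ E] [FiniteDimensional ℝ F] [MeasurableSpace E] [BorelSpace E]
  {μ : Measure E} [μ.IsAddHaarMeasure]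

theorem ae_differentiableAt_of_mem_of_forall_norm_sub_le (f : E → F) {k r : ℝ} (hr : 0 < r)
    (hk : 0 ≤ k) : ∀ᵐ x ∂μ,
      (∀ y, dist y x < r → ‖f y - f x‖ ≤ k * ‖y - x‖) → DifferentiableAt ℝ f x := by
  set S := {x | ∀ y, dist y x < r → ‖f y - f x‖ ≤ k * ‖y - x‖}
  rw [← Measure.restrict_univ (μ := μ)]
  refine ae_restrict_of_forall_mem_exists_nhds .univ fun c _ ↦
    ⟨ball c (r / 2), ball_mem_nhds c (half_pos hr), ?_⟩
  set s := S ∩ ball c (r / 2)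
  have hlip : LipschitzOnWith ⟨k, hk⟩ f s := .of_dist_le_mul fun x hx y hy ↦ by
    rw [dist_eq_norm, dist_eq_norm]
    have hxc := hx.2
    have hyc := hy.2
    rw [mem_ball] at hxc hyc
    exact hy.1 x (by linarith [dist_triangle_right x y c])
  filter_upwards [hlip.ae_differentiableWithinAt_of_mem (μ := μ),
    ae_imp_of_ae_restrict (ae_restrict_eventually_exists_dist_le μ s)] with x hdiff hdens hxc hxS
  have hxs : x ∈ s := ⟨hxS, hxc⟩
  exact (hasFDerivAt_of_eventually_exists_dist_le hr hk
    (fun z hz ↦ hz.1) (hdiff hxs).hasFDerivWithinAt (hdens hxs)).differentiableAt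

theorem ae_differentiableAt_of_ae_isBigO {f : E → F} {D : Set E}
    (h : ∀ᵐ x ∂μ.restrict D, (fun y ↦ f y - f x) =O[𝓝 x] fun y ↦ y - x) :
    ∀ᵐ x ∂μ.restrict D, DifferentiableAt ℝ f x := by
  filter_upwards [h, ae_restrict_of_ae (ae_all_iff.2 fun k : ℕ ↦
    ae_differentiableAt_of_mem_of_forall_norm_sub_le f (μ := μ) (Nat.one_div_pos_of_nat (n := k))
      k.cast_nonneg)] with x hx hk
  obtain ⟨A, hA⟩ := hx.bound
  obtain ⟨r, hr, hA⟩ := Metric.eventually_nhds_iff.1 hA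
  obtain ⟨i, hi⟩ := exists_nat_ge A
  obtain ⟨j, hj⟩ := exists_nat_one_div_lt hr
  refine hk (max i j) fun y hy ↦ (hA (hy.trans_le ?_)).trans ?_
  · exact (Nat.one_div_le_one_div (le_max_right i j)).trans hj.le
  · gcongr
    exact hi.trans (by exact_mod_cast le_max_left i j)

end Stepanov

section LebesguePoints

theorem eventually_eqOn_indicator_closedBall {X Y : Type*} [PseudoMetricSpace X] [Zero Y]
    (h : X → Y) {c x : X} {r : ℝ}
    (hx : x ∈ ball c r) :
    ∀ᶠ s in 𝓝[>] 0, EqOn ((closedBall c r).indicator h) h (closedBall x s) := by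
  obtain ⟨e, he, hec⟩ := Metric.isOpen_iff.1 isOpen_ball x hx
  filter_upwards [Ioo_mem_nhdsGT he] with s hs y hy
  exact indicator_of_mem (ball_subset_closedBall (hec (closedBall_subset_ball hs.2 hy))) h

variable {E : Type*} [NormedAddCommGroup E] [NormedSpace ℝ E] [FiniteDimensional ℝ E]
  [MeasurableSpace E] [BorelSpace E] {μ : Measure E} [μ.IsAddHaarMeasure] {D : Set E}

theorem ae_restrict_tendsto_setLAverage_closedBall (hD : IsOpen D) {h : E → ℝ≥0∞}
    (hm : AEMeasurable h (μ.restrict D))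
    (hfin : ∀ K ⊆ D, IsCompact K → ∫⁻ x in K, h x ∂μ < ⊤) :
    ∀ᵐ x ∂μ.restrict D, h x < ⊤ ∧
      Tendsto (fun s ↦ ⨍⁻ y in closedBall x s, h y ∂μ) (𝓝[>] 0) (𝓝 (h x)) := by
  refine ae_restrict_of_forall_mem_exists_nhds hD.measurableSet fun c hc ↦ ?_
  obtain ⟨r, hr, hrD⟩ := Metric.nhds_basis_closedBall.mem_iff.1 (hD.mem_nhds hc)
  refine ⟨ball c r, ball_mem_nhds c hr, ?_⟩
  have hgm : AEMeasurable ((closedBall c r).indicator h) μ :=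
    (aemeasurable_indicator_iff measurableSet_closedBall).2
      (hm.mono_measure (Measure.restrict_mono hrD le_rfl))
  have hgfin : ∫⁻ y, (closedBall c r).indicator h y ∂μ ≠ ⊤ := by
    rw [lintegral_indicator measurableSet_closedBall]
    exact (hfin _ hrD (isCompact_closedBall _ _)).ne
  filter_upwards [(Besicovitch.vitaliFamily μ).ae_tendsto_lintegral_div hgm hgfin,
    ae_lt_top' hgm hgfin] with x hlim hx hxc
  rw [indicator_of_mem (ball_subset_closedBall hxc)] at hlim hx
  refine ⟨hx, (hlim.comp (Besicovitch.tendsto_filterAt μ x)).congr' ?_⟩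
  filter_upwards [eventually_eqOn_indicator_closedBall h hxc] with s hs
  rw [Function.comp_apply, setLIntegral_congr_fun measurableSet_closedBall hs, setLAverage_eq]

theorem ae_restrict_tendsto_setAverage_norm_sub {F : Type*} [NormedAddCommGroup F] (hD : IsOpen D)
    {h : E → F} (hh : LocallyIntegrableOn h D μ) : ∀ᵐ x ∂μ.restrict D,
      Tendsto (fun s ↦ ⨍ y in closedBall x s, ‖h y - h x‖ ∂μ) (𝓝[>] 0) (𝓝 0) := by
  refine ae_restrict_of_forall_mem_exists_nhds hD.measurableSet fun c hc ↦ ?_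
  obtain ⟨r, hr, hrD⟩ := Metric.nhds_basis_closedBall.mem_iff.1 (hD.mem_nhds hc)
  refine ⟨ball c r, ball_mem_nhds c hr, ?_⟩
  have hint : Integrable ((closedBall c r).indicator h) μ :=
    (integrable_indicator_iff measurableSet_closedBall).2
      (hh.integrableOn_compact_subset hrD (isCompact_closedBall _ _))
  filter_upwards [(Besicovitch.vitaliFamily μ).ae_tendsto_average_norm_sub hint.locallyIntegrable]
    with x hlim hxc
  refine (hlim.comp (Besicovitch.tendsto_filterAt μ x)).congr' ?_
  filter_upwards [eventually_eqOn_indicator_closedBall h hxc] with s hs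
  refine setAverage_congr_fun measurableSet_closedBall (.of_forall fun y hy ↦ ?_)
  rw [hs hy, indicator_of_mem (ball_subset_closedBall hxc)]

end LebesguePoints

theorem HasOscillationBound.ae_isBigO {E F : Type*} [NormedAddCommGroup E] [NormedSpace ℝ E]
    [FiniteDimensional ℝ E] [MeasureSpace E] [BorelSpace E] [(volume : Measure E).IsAddHaarMeasure]
    [SeminormedAddCommGroup F] {D : Set E} {f : E → F} {g : E → ℝ≥0∞} {α : ℝ}
    (hosc : HasOscillationBound D f g α) (hα : 0 < α) (hD : IsOpen D)
    (hm : AEMeasurable g (volume.restrict D))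
    (hfin : ∀ K ⊆ D, IsCompact K → ∫⁻ x in K, g x < ⊤) :
    ∀ᵐ x ∂volume.restrict D, (fun y ↦ f y - f x) =O[𝓝 x] fun y ↦ y - x := by
  obtain ⟨C, hC, M, hM, hosc⟩ := hosc
  have hM0 : 0 < M := one_pos.trans hM
  filter_upwards [ae_restrict_tendsto_setLAverage_closedBall hD hm hfin,
    ae_restrict_mem hD.measurableSet] with x ⟨hgx, hlim⟩ hxD
  obtain ⟨e, he, heD⟩ := Metric.nhds_basis_closedBall.mem_iff.1 (hD.mem_nhds hxD)
  obtain ⟨e', he', hlt⟩ := mem_nhdsGT_iff_exists_Ioo_subset.1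
    (hlim.eventually (gt_mem_nhds (ENNReal.lt_add_right hgx.ne one_ne_zero)))
  set A : ℝ≥0∞ := (C * (g x + 1)) ^ α⁻¹
  have hA : A ≠ ⊤ := ENNReal.rpow_ne_top_of_nonneg (by positivity)
    (ENNReal.mul_ne_top hC (by simpa using hgx.ne))
  refine .of_bound A.toReal ?_
  filter_upwards [closedBall_mem_nhds x (div_pos he hM0), ball_mem_nhds x (div_pos he' hM0)]
    with y hye hye'
  rcases eq_or_ne y x with rfl | hyx
  · simp
  have hs : 0 < dist y x := dist_pos.2 hyx
  rw [mem_closedBall, le_div_iff₀' hM0] at hye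
  rw [mem_ball, lt_div_iff₀' hM0] at hye'
  have hav : ⨍⁻ z in closedBall x (M * dist y x), g z ∂volume ≤ g x + 1 :=
    (hlt ⟨by positivity, hye'⟩).le
  have hpow : edist (f y) (f x) ^ α ≤ (ENNReal.ofReal (dist y x) * A) ^ α :=
    calc edist (f y) (f x) ^ α ≤ ediam (f '' closedBall x (dist y x)) ^ α := by
          gcongr
          exact edist_le_ediam_of_mem (mem_image_of_mem f (mem_closedBall.2 le_rfl))
            (mem_image_of_mem f (mem_closedBall_self hs.le))
      _ ≤ C * (ENNReal.ofReal (dist y x) ^ α * ⨍⁻ z in closedBall x (M * dist y x), g z ∂volume) :=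
          hosc x _ hs ((closedBall_subset_closedBall hye).trans heD)
      _ ≤ C * (ENNReal.ofReal (dist y x) ^ α * (g x + 1)) := by gcongr
      _ = _ := by
          rw [ENNReal.mul_rpow_of_nonneg _ _ hα.le, ← ENNReal.rpow_mul, inv_mul_cancel₀ hα.ne',
            ENNReal.rpow_one]
          ring
  have hle := ENNReal.toReal_mono (ENNReal.mul_ne_top ENNReal.ofReal_ne_top hA)
    ((ENNReal.rpow_le_rpow_iff hα).1 hpow)
  rw [ENNReal.toReal_mul, ENNReal.toReal_ofReal hs.le, ← dist_edist, mul_comm] at hle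
  rwa [← dist_eq_norm, ← dist_eq_norm]

section WeakDerivativeAtLebesguePoint

variable {n m : ℕ} {D : Set (Eucl n)} {f : Eucl n → Eucl m} {Df : Eucl n → Eucl n →L[ℝ] Eucl m}

theorem isWeakDerivOn_of_contDiff (hf : ContDiff ℝ 1 f) (D : Set (Eucl n)) :
    IsWeakDerivOn D f (fderiv ℝ f) := by
  have hdf := hf.continuous_fderiv one_ne_zero
  refine ⟨hf.continuous.locallyIntegrable.locallyIntegrableOn _,
    hdf.locallyIntegrable.locallyIntegrableOn _, fun ψ hψ hψc _ v ↦ ?_⟩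
  have hψ1 : ContDiff ℝ 1 ψ := hψ.of_le (by exact_mod_cast le_top)
  have hdψ := hψ1.continuous_fderiv one_ne_zero
  refine integral_smul_fderiv_eq_neg_fderiv_smul_of_integrable ?_ ?_ ?_
    (fun x _ ↦ hψ1.differentiable one_ne_zero x) fun x _ ↦ hf.differentiable one_ne_zero x
  · exact ((hdψ.clm_apply continuous_const).smul hf.continuous).integrable_of_hasCompactSupport
      ((hψc.fderiv_apply ℝ v).smul_right)
  · exact (hψ.continuous.smul (hdf.clm_apply continuous_const)).integrable_of_hasCompactSupport
      hψc.smul_right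
  · exact (hψ.continuous.smul hf.continuous).integrable_of_hasCompactSupport hψc.smul_right

theorem integrable_smul_of_locallyIntegrableOn {E F : Type*} [TopologicalSpace E]
    [T2Space E] [MeasurableSpace E] [BorelSpace E] [NormedAddCommGroup F]
    [NormedSpace ℝ F] {μ : Measure E} {D : Set E} {h : E → F} (hh : LocallyIntegrableOn h D μ)
    {ψ : E → ℝ} (hψ : Continuous ψ) (hψc : HasCompactSupport ψ) (hψD : tsupport ψ ⊆ D) :
    Integrable (fun y ↦ ψ y • h y) μ := by
  have hint : Integrable ((tsupport ψ).indicator h) μ :=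
    (integrable_indicator_iff (isClosed_tsupport ψ).measurableSet).2
      (hh.integrableOn_compact_subset hψD hψc)
  refine (hint.locallyIntegrable.integrable_smul_left_of_hasCompactSupport hψ hψc).congr
    (.of_forall fun y ↦ ?_)
  by_cases hy : y ∈ tsupport ψ
  · simp [hy]
  · simp [image_eq_zero_of_notMem_tsupport hy]

theorem IsWeakDerivOn.sub {g : Eucl n → Eucl m} {Dg : Eucl n → Eucl n →L[ℝ] Eucl m}
    (hf : IsWeakDerivOn D f Df) (hg : IsWeakDerivOn D g Dg) :
    IsWeakDerivOn D (fun y ↦ f y - g y) fun y ↦ Df y - Dg y := by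
  refine ⟨hf.1.sub hg.1, hf.2.1.sub hg.2.1, fun ψ hψ hψc hψD v ↦ ?_⟩
  have hint {h : Eucl n → Eucl m} {Dh : Eucl n → Eucl n →L[ℝ] Eucl m}
      (hh : IsWeakDerivOn D h Dh) : Integrable (fun y ↦ ψ y • Dh y v) ∧
        Integrable fun y ↦ fderiv ℝ ψ y v • h y :=
    ⟨(integrable_smul_of_locallyIntegrableOn hh.2.1 hψ.continuous hψc
      hψD).apply_continuousLinearMap v,
    integrable_smul_of_locallyIntegrableOn hh.1
      ((hψ.continuous_fderiv (by simp)).clm_apply continuous_const) (hψc.fderiv_apply ℝ v)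
      ((tsupport_fderiv_apply_subset ℝ v).trans hψD)⟩
  simp only [sub_apply, smul_sub]
  rw [integral_sub (hint hf).1 (hint hg).1, integral_sub (hint hf).2 (hint hg).2,
    hf.2.2 ψ hψ hψc hψD v, hg.2.2 ψ hψ hψc hψD v]
  abel

theorem IsWeakDerivOn.norm_integral_smul_le (hw : IsWeakDerivOn D f Df) {B : Set (Eucl n)}
    (hB : IsCompact B) (hBD : B ⊆ D) {ψ : Eucl n → ℝ} (hψ : ContDiff ℝ (⊤ : ℕ∞) ψ)
    (hψB : tsupport ψ ⊆ B) {G η : ℝ} (hG : ∀ y, ‖fderiv ℝ ψ y‖ ≤ G) (hη : ∀ y ∈ B, ‖f y‖ ≤ η)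
    (v : Eucl n) : ‖∫ y, ψ y • Df y v‖ ≤ G * ‖v‖ * η * volume.real B := by
  have hsupp : ∀ y ∉ B, fderiv ℝ ψ y v • f y = 0 := fun y hy ↦ by
    have : fderiv ℝ ψ y = 0 := Function.notMem_support.1 fun h ↦
      hy (hψB (support_fderiv_subset ℝ h))
    simp [this]
  rw [hw.2.2 ψ hψ (hB.of_isClosed_subset (isClosed_tsupport ψ) hψB) (hψB.trans hBD) v, norm_neg,
    ← setIntegral_eq_integral_of_forall_compl_eq_zero hsupp]
  refine norm_setIntegral_le_of_norm_le_const hB.measure_lt_top fun y hy ↦ ?_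
  rw [norm_smul]
  exact mul_le_mul ((fderiv ℝ ψ y).le_of_opNorm_le (hG y) v) (hη y hy) (norm_nonneg _)
    (mul_nonneg ((norm_nonneg _).trans (hG y)) (norm_nonneg _))

theorem exists_bump_norm_fderiv_le (E : Type*) [NormedAddCommGroup E] [NormedSpace ℝ E]
    [FiniteDimensional ℝ E] [MeasurableSpace E] [BorelSpace E] (μ : Measure E)
    [μ.IsAddHaarMeasure] : ∃ c > 0, ∃ G : ℝ, 0 ≤ G ∧ ∀ (x : E) (s : ℝ), 0 < s → ∃ ψ : E → ℝ,
      ContDiff ℝ (⊤ : ℕ∞) ψ ∧ tsupport ψ ⊆ closedBall x s ∧ (∀ y, ‖ψ y‖ ≤ 1) ∧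
      (∀ y, ‖fderiv ℝ ψ y‖ ≤ G * s⁻¹) ∧ c * μ.real (closedBall x s) ≤ ∫ y, ψ y ∂μ := by
  let φ : ContDiffBump (0 : E) := ⟨1 / 2, 1, by norm_num, by norm_num⟩
  obtain ⟨G, hG⟩ := ((φ.contDiff (n := 1)).continuous_fderiv
    one_ne_zero).bounded_above_of_compact_support
    (φ.hasCompactSupport.fderiv ℝ)
  refine ⟨(1 / 2) ^ Module.finrank ℝ E, by positivity, G, (norm_nonneg _).trans (hG 0),
    fun x s hs ↦ ⟨fun y ↦ φ (s⁻¹ • (y - x)), ?_, ?_, ?_, ?_, ?_⟩⟩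
  · exact φ.contDiff.comp ((contDiff_id.sub contDiff_const).const_smul s⁻¹)
  · refine closure_minimal (fun y hy ↦ ?_) isClosed_closedBall
    have hy' : s⁻¹ • (y - x) ∈ ball (0 : E) 1 := φ.support_eq ▸ hy
    rw [mem_ball_zero_iff, norm_smul, norm_inv, Real.norm_of_nonneg hs.le, inv_mul_lt_iff₀ hs,
      mul_one] at hy'
    exact mem_closedBall_iff_norm.2 hy'.le
  · intro y
    rw [Real.norm_of_nonneg φ.nonneg]
    exact φ.le_one
  · intro y
    rw [fderiv_comp_sub (f := fun z ↦ φ (s⁻¹ • z)), fderiv_comp_smul, norm_smul, norm_inv,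
      Real.norm_of_nonneg hs.le, mul_comm]
    gcongr
    exact hG _
  · rw [integral_sub_right_eq_self (fun z ↦ φ (s⁻¹ • z)) x, Measure.integral_comp_inv_smul_of_nonneg
      μ φ hs.le, smul_eq_mul, Measure.addHaar_real_closedBall μ x hs.le, mul_left_comm]
    gcongr
    refine le_trans (le_of_eq ?_) (φ.measure_closedBall_le_integral μ)
    exact (Measure.addHaar_real_closedBall μ 0 (by norm_num)).symm

theorem norm_integral_smul_apply_le {E F G : Type*} [MeasurableSpace E] [TopologicalSpace E]
    [NormedAddCommGroup F] [NormedSpace ℝ F] [NormedAddCommGroup G] [NormedSpace ℝ G]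
    {μ : Measure E} {B : Set E} (hB : μ B ≠ ⊤) {h : E → F →L[ℝ] G}
    (hh : IntegrableOn h B μ) {ψ : E → ℝ} (hψB : tsupport ψ ⊆ B) (hψ1 : ∀ y, ‖ψ y‖ ≤ 1) (v : F) :
    ‖∫ y, ψ y • h y v ∂μ‖ ≤ (⨍ y in B, ‖h y‖ ∂μ) * ‖v‖ * μ.real B := by
  have hsupp : ∀ y ∉ B, ψ y • h y v = 0 := fun y hy ↦ by
    simp [image_eq_zero_of_notMem_tsupport fun hyψ ↦ hy (hψB hyψ)]
  calc ‖∫ y, ψ y • h y v ∂μ‖ = ‖∫ y in B, ψ y • h y v ∂μ‖ := by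
        rw [setIntegral_eq_integral_of_forall_compl_eq_zero hsupp]
    _ ≤ ∫ y in B, ‖h y‖ * ‖v‖ ∂μ :=
        norm_integral_le_of_norm_le (hh.norm.mul_const _) <| .of_forall fun y ↦ by
          rw [norm_smul]
          exact (mul_le_of_le_one_left (norm_nonneg _) (hψ1 y)).trans ((h y).le_opNorm v)
    _ = _ := by rw [integral_mul_const, ← measure_smul_setAverage _ hB, smul_eq_mul]; ring

theorem isWeakDerivOn_affine (D : Set (Eucl n)) (L : Eucl n →L[ℝ] Eucl m) (x : Eucl n)
    (b : Eucl m) : IsWeakDerivOn D (fun y ↦ b + L (y - x)) fun _ ↦ L := by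
  have hfderiv : fderiv ℝ (fun y ↦ b + L (y - x)) = fun _ ↦ L := funext fun y ↦
    ((L.hasFDerivAt.comp y ((hasFDerivAt_id y).sub_const x)).const_add b).fderiv
  exact hfderiv ▸ isWeakDerivOn_of_contDiff (by fun_prop) D

theorem IsWeakDerivOn.exists_norm_sub_le (hw : IsWeakDerivOn D f Df) :
    ∃ C : ℝ, 0 ≤ C ∧ ∀ (x : Eucl n) (s η : ℝ) (A : Eucl n →L[ℝ] Eucl m), 0 < s →
      closedBall x s ⊆ D → (∀ y ∈ closedBall x s, ‖f y - (f x + A (y - x))‖ ≤ η * s) →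
      ⨍ y in closedBall x s, ‖Df y - Df x‖ ≤ η → ‖Df x - A‖ ≤ C * η := by
  obtain ⟨c, hc, G, hG, hbump⟩ := exists_bump_norm_fderiv_le (Eucl n) volume
  refine ⟨(G + 1) / c, by positivity, fun x s η A hs hsD hA hη ↦ ?_⟩
  set V := volume.real (closedBall x s)
  have hV : 0 < V := ENNReal.toReal_pos (measure_closedBall_pos _ _ hs).ne'
    measure_closedBall_lt_top.ne
  have hη0 : 0 ≤ η :=
    nonneg_of_mul_nonneg_left ((norm_nonneg _).trans (hA x (mem_closedBall_self hs.le))) hs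
  obtain ⟨ψ, hψ, hψs, hψ1, hdψ, hcψ⟩ := hbump x s hs
  have hψc : HasCompactSupport ψ :=
    (isCompact_closedBall x s).of_isClosed_subset (isClosed_tsupport ψ) hψs
  have hwA := hw.sub (isWeakDerivOn_affine D A x (f x))
  have hwx := hw.sub (isWeakDerivOn_affine D (Df x) x 0)
  refine ContinuousLinearMap.opNorm_le_bound _ (by positivity) fun v ↦ ?_
  have htaylor : ‖∫ y, ψ y • (Df y - A) v‖ ≤ G * η * ‖v‖ * V :=
    (hwA.norm_integral_smul_le (isCompact_closedBall x s) hsD hψ hψs hdψ hA v).trans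
      (by rw [show G * s⁻¹ * ‖v‖ * (η * s) = G * η * ‖v‖ by field_simp])
  have haverage : ‖∫ y, ψ y • (Df y - Df x) v‖ ≤ η * ‖v‖ * V :=
    (norm_integral_smul_apply_le measure_closedBall_lt_top.ne
      (hwx.2.1.integrableOn_compact_subset hsD (isCompact_closedBall x s)) hψs hψ1 v).trans
      (by gcongr)
  have hint {B : Eucl n →L[ℝ] Eucl m} (hB : LocallyIntegrableOn (fun y ↦ Df y - B) D) :
      Integrable fun y ↦ ψ y • (Df y - B) v :=
    (integrable_smul_of_locallyIntegrableOn hB hψ.continuous hψc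
      (hψs.trans hsD)).apply_continuousLinearMap v
  have hsplit : (∫ y, ψ y) • (Df x - A) v =
      (∫ y, ψ y • (Df y - A) v) - ∫ y, ψ y • (Df y - Df x) v := by
    rw [← integral_sub (hint hwA.2.1) (hint hwx.2.1), ← integral_smul_const]
    simp [← smul_sub]
  refine le_of_mul_le_mul_left ?_ (mul_pos hc hV)
  calc c * V * ‖(Df x - A) v‖ ≤ ‖(∫ y, ψ y) • (Df x - A) v‖ := by
        rw [norm_smul]
        gcongr
        exact hcψ.trans (Real.le_norm_self _)
    _ ≤ G * η * ‖v‖ * V + η * ‖v‖ * V :=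
        hsplit ▸ (norm_sub_le _ _).trans (add_le_add htaylor haverage)
    _ = c * V * ((G + 1) / c * η * ‖v‖) := by field_simp

theorem IsWeakDerivOn.eq_of_hasFDerivAt (hw : IsWeakDerivOn D f Df) {x : Eucl n} (hD : D ∈ 𝓝 x)
    {A : Eucl n →L[ℝ] Eucl m} (hA : HasFDerivAt f A x)
    (hLeb : Tendsto (fun s ↦ ⨍ y in closedBall x s, ‖Df y - Df x‖) (𝓝[>] 0) (𝓝 0)) :
    Df x = A := by
  obtain ⟨C, hC, hbound⟩ := hw.exists_norm_sub_le
  rw [← sub_eq_zero, ← norm_le_zero_iff]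
  refine le_of_forall_pos_le_add fun ε hε ↦ ?_
  have hη : 0 < ε / (C + 1) := by positivity
  obtain ⟨e, he, hsmall⟩ := Metric.nhds_basis_closedBall.mem_iff.1
    (inter_mem hD ((hasFDerivAt_iff_isLittleO.1 hA).def hη))
  obtain ⟨s, hs, hsη⟩ :=
    (Filter.Eventually.and (Ioo_mem_nhdsGT he) (hLeb.eventually (gt_mem_nhds hη))).exists
  have hse : closedBall x s ⊆ closedBall x e := closedBall_subset_closedBall hs.2.le
  refine (hbound x s _ A hs.1 (fun y hy ↦ (hsmall (hse hy)).1) (fun y hy ↦ ?_) hsη.le).trans ?_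
  · rw [← sub_sub]
    exact (hsmall (hse hy)).2.trans (by gcongr; exact mem_closedBall_iff_norm.1 hy)
  · rw [zero_add, mul_div_assoc', div_le_iff₀ (by positivity)]
    nlinarith

theorem IsWeakDerivOn.ae_hasFDerivAt (hw : IsWeakDerivOn D f Df) (hD : IsOpen D) {g : Eucl n → ℝ≥0∞}
    {α : ℝ} (hα : 0 < α) (hosc : HasOscillationBound D f g α)
    (hgm : AEMeasurable g (volume.restrict D)) (hg : ∀ K ⊆ D, IsCompact K → ∫⁻ x in K, g x < ⊤) :
    ∀ᵐ x ∂volume.restrict D, HasFDerivAt f (Df x) x := by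
  filter_upwards [ae_differentiableAt_of_ae_isBigO (hosc.ae_isBigO hα hD hgm hg),
    ae_restrict_tendsto_setAverage_norm_sub hD hw.2.1, ae_restrict_mem hD.measurableSet]
    with x hx hLeb hxD
  exact hw.eq_of_hasFDerivAt (hD.mem_nhds hxD) hx.hasFDerivAt hLeb ▸ hx.hasFDerivAt

end WeakDerivativeAtLebesguePoint

section Eilenberg

theorem lintegral_tsum_indicator_Icc {ι : Type*} [Countable ι] (c s : ι → ℝ) (a : ι → ℝ≥0∞) :
    ∫⁻ r, ∑' i, (Icc (c i - s i) (c i + s i)).indicator (fun _ ↦ a i) r =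
      2 * ∑' i, ENNReal.ofReal (s i) * a i := by
  rw [lintegral_tsum fun i ↦ (measurable_const.indicator measurableSet_Icc).aemeasurable,
    ← ENNReal.tsum_mul_left]
  refine tsum_congr fun i ↦ ?_
  rw [lintegral_indicator_const measurableSet_Icc, Real.volume_Icc,
    show c i + s i - (c i - s i) = 2 * s i by ring, ENNReal.ofReal_mul zero_le_two,
    ENNReal.ofReal_ofNat]
  ring

variable {X Y : Type*} [MetricSpace X] [EMetricSpace Y] [MeasurableSpace Y] [BorelSpace Y]
  {A : Set X} {h : X → ℝ} {f : X → Y} {d : ℝ}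

theorem hausdorffMeasure_image_level_le_liminf (hd : 0 < d) (hh : LipschitzWith 1 h)
    {t : ℕ → Set X} [∀ k, Countable (t k)] {s : ℕ → X → ℝ} {δ : ℕ → ℝ≥0∞}
    (hδ : Tendsto δ atTop (𝓝 0)) (hcover : ∀ k, A ⊆ ⋃ x ∈ t k, closedBall x (s k x))
    (hdiam : ∀ k, ∀ x ∈ t k, ediam (f '' closedBall x (s k x)) ≤ δ k) (r : ℝ) :
    μH[d] (f '' (A ∩ h ⁻¹' {r})) ≤ liminf (fun k ↦ ∑' x : t k,
      (Icc (h x - s k x) (h x + s k x)).indicator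
        (fun _ ↦ ediam (f '' closedBall (x : X) (s k x)) ^ d) r) atTop := by
  set T : ∀ k, t k → Set Y := fun k x ↦
    if r ∈ Icc (h x - s k x) (h x + s k x) then f '' closedBall (x : X) (s k x) else ∅
  have hT_diam (k : ℕ) (x : t k) : ediam (T k x) ≤ δ k := by
    unfold T
    split_ifs
    exacts [hdiam k x x.2, by simp]
  have hT_cover (k : ℕ) : f '' (A ∩ h ⁻¹' {r}) ⊆ ⋃ x, T k x := by
    rintro _ ⟨y, ⟨hyA, rfl⟩, rfl⟩
    obtain ⟨x, hx, hyx⟩ := mem_iUnion₂.1 (hcover k hyA)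
    have hlevel : h y ∈ Icc (h x - s k x) (h x + s k x) := by
      have := (hh.dist_le_mul y x).trans_eq (one_mul _)
      rw [← Real.closedBall_eq_Icc]
      exact this.trans hyx
    refine mem_iUnion.2 ⟨⟨x, hx⟩, ?_⟩
    unfold T
    rw [if_pos hlevel]
    exact mem_image_of_mem f hyx
  refine (Measure.hausdorffMeasure_le_liminf_tsum d _ δ hδ T (.of_forall hT_diam)
    (.of_forall hT_cover)).trans_eq
    (congrArg (liminf · atTop) (funext fun k ↦ tsum_congr fun x ↦ ?_))
  unfold T
  by_cases hr : r ∈ Icc (h x - s k x) (h x + s k x) <;> simp [hr, hd]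

/-- The measurable majorant `F` is needed because `r ↦ μH[d] (f '' (A ∩ h ⁻¹' {r}))` may fail to be
measurable. -/
theorem exists_measurable_hausdorffMeasure_image_level_le [SecondCountableTopology X]
    [MeasurableSpace X] [OpensMeasurableSpace X] [HasBesicovitchCovering X] {ν : Measure X}
    [SFinite ν] [ν.OuterRegular] (hd : 0 < d) (hh : LipschitzWith 1 h) {C : ℝ≥0∞} (hC : C ≠ ⊤)
    (hball : ∀ x ∈ A, ∀ δ > 0, ∃ s ∈ Ioo 0 δ,
      ediam (f '' closedBall x s) ≤ ENNReal.ofReal δ ∧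
        ENNReal.ofReal s * ediam (f '' closedBall x s) ^ d ≤ C * ν (closedBall x s)) :
    ∃ F : ℝ → ℝ≥0∞, Measurable F ∧ (∀ r, μH[d] (f '' (A ∩ h ⁻¹' {r})) ≤ F r) ∧
      ∫⁻ r, F r ≤ 2 * C * ν A := by
  set δ : ℕ → ℝ := fun k ↦ 1 / (k + 1)
  have hδ_pos (k : ℕ) : 0 < δ k := Nat.one_div_pos_of_nat
  have hδ_lim : Tendsto (fun k ↦ ENNReal.ofReal (δ k)) atTop (𝓝 0) := by
    simpa [δ] using ENNReal.tendsto_ofReal tendsto_one_div_add_atTop_nhds_zero_nat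
  have hcover (k : ℕ) := Besicovitch.exists_closedBall_covering_tsum_measure_le ν
    (ENNReal.ofReal_pos.2 (hδ_pos k)).ne'
    (fun x ↦ {s | ediam (f '' closedBall x s) ≤ ENNReal.ofReal (δ k) ∧
      ENNReal.ofReal s * ediam (f '' closedBall x s) ^ d ≤ C * ν (closedBall x s)}) A
    fun x hx η hη ↦ by
      obtain ⟨s, hs, hdiam, hsmall⟩ := hball x hx (min η (δ k)) (lt_min hη (hδ_pos k))
      exact ⟨s, ⟨hdiam.trans (ENNReal.ofReal_le_ofReal (min_le_right _ _)), hsmall⟩, hs.1,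
        hs.2.trans_le (min_le_left _ _)⟩
  choose t s ht_count _ hs ht_cover ht_sum using hcover
  have (k : ℕ) : Countable (t k) := (ht_count k).to_subtype
  set G : ℕ → ℝ → ℝ≥0∞ := fun k r ↦ ∑' x : t k, (Icc (h x - s k x) (h x + s k x)).indicator
    (fun _ ↦ ediam (f '' closedBall (x : X) (s k x)) ^ d) r
  have hGm (k : ℕ) : Measurable (G k) :=
    Measurable.tsum fun x ↦ measurable_const.indicator measurableSet_Icc
  have hG_int (k : ℕ) : ∫⁻ r, G k r ≤ 2 * C * (ν A + ENNReal.ofReal (δ k)) := by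
    rw [lintegral_tsum_indicator_Icc, mul_assoc]
    refine mul_le_mul_right ((ENNReal.tsum_le_tsum fun x : t k ↦ (hs k x x.2).2).trans ?_) _
    rw [ENNReal.tsum_mul_left]
    exact mul_le_mul_right (ht_sum k) _
  have hlim : Tendsto (fun k ↦ 2 * C * (ν A + ENNReal.ofReal (δ k))) atTop (𝓝 (2 * C * ν A)) := by
    simpa using ENNReal.Tendsto.const_mul (tendsto_const_nhds.add hδ_lim)
      (Or.inr (ENNReal.mul_ne_top ENNReal.ofNat_ne_top hC))
  refine ⟨fun r ↦ liminf (G · r) atTop, .liminf hGm,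
    hausdorffMeasure_image_level_le_liminf hd hh hδ_lim ht_cover fun k x hx ↦ (hs k x hx).1, ?_⟩
  calc ∫⁻ r, liminf (G · r) atTop ≤ liminf (fun k ↦ ∫⁻ r, G k r) atTop := lintegral_liminf_le hGm
    _ ≤ liminf (fun k ↦ 2 * C * (ν A + ENNReal.ofReal (δ k))) atTop :=
      liminf_le_liminf (.of_forall hG_int)
    _ = 2 * C * ν A := hlim.liminf_eq

end Eilenberg

section Doubling

theorem pow_mul_measure_closedBall_div_pow_le {X : Type*} [PseudoMetricSpace X]
    [MeasurableSpace X] {ν : Measure X} {x : X} {K : ℝ≥0∞} {M δ ρ : ℝ} (hM : 1 ≤ M)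
    (hdecay : ∀ s ∈ Ioo 0 δ, K * ν (closedBall x s) ≤ ν (closedBall x (M * s)))
    (hρ : ρ ∈ Ioo 0 δ) (k : ℕ) :
    K ^ k * ν (closedBall x (ρ / M ^ k)) ≤ ν (closedBall x ρ) := by
  induction k with
  | zero => simp
  | succ k ih =>
    have : 0 < M := by linarith
    have hmem : ρ / M ^ (k + 1) ∈ Ioo 0 δ :=
      ⟨div_pos hρ.1 (by positivity), (div_le_self hρ.1.le (one_le_pow₀ hM)).trans_lt hρ.2⟩
    have hstep := hdecay _ hmem
    rw [show M * (ρ / M ^ (k + 1)) = ρ / M ^ k by rw [pow_succ]; field_simp] at hstep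
    calc K ^ (k + 1) * ν (closedBall x (ρ / M ^ (k + 1)))
        = K ^ k * (K * ν (closedBall x (ρ / M ^ (k + 1)))) := by rw [pow_succ, mul_assoc]
      _ ≤ K ^ k * ν (closedBall x (ρ / M ^ k)) := by gcongr
      _ ≤ ν (closedBall x ρ) := ih

/-- If the doubling inequality failed at all small radii, `ν` would decay faster than `μ`. -/
theorem exists_measure_closedBall_mul_le {E : Type*} [NormedAddCommGroup E] [NormedSpace ℝ E]
    [FiniteDimensional ℝ E] [MeasurableSpace E] [BorelSpace E] {μ ν : Measure E}
    [μ.IsAddHaarMeasure] [IsFiniteMeasureOnCompacts ν] (hμν : μ ≤ ν) {M : ℝ} (hM : 1 < M) (x : E)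
    {δ : ℝ} (hδ : 0 < δ) :
    ∃ s ∈ Ioo 0 δ, ν (closedBall x (M * s)) ≤
      ENNReal.ofReal (2 * M ^ Module.finrank ℝ E) * ν (closedBall x s) := by
  by_contra! hfail
  set m := Module.finrank ℝ E
  set ρ := δ / 2
  have : 0 < M := by linarith
  have hρ : ρ ∈ Ioo 0 δ := ⟨half_pos hδ, half_lt_self hδ⟩
  have hrescale (k : ℕ) : ENNReal.ofReal (2 * M ^ m) ^ k * μ (closedBall x (ρ / M ^ k)) =
      2 ^ k * μ (closedBall x ρ) := by
    have hscale : (2 * M ^ m) ^ k * (ρ / M ^ k) ^ m = 2 ^ k * ρ ^ m := by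
      rw [mul_pow, div_pow, pow_right_comm]
      field_simp
    rw [Measure.addHaar_closedBall _ _ (div_pos hρ.1 (by positivity)).le,
      Measure.addHaar_closedBall _ _ hρ.1.le, ← ENNReal.ofReal_pow (by positivity), ← mul_assoc,
      ← ENNReal.ofReal_mul (by positivity), hscale, ENNReal.ofReal_mul (by positivity),
      ENNReal.ofReal_pow zero_le_two, ENNReal.ofReal_ofNat, mul_assoc]
  have hbound (k : ℕ) : 2 ^ k * μ (closedBall x ρ) ≤ ν (closedBall x ρ) :=
    calc 2 ^ k * μ (closedBall x ρ)
        = ENNReal.ofReal (2 * M ^ m) ^ k * μ (closedBall x (ρ / M ^ k)) := (hrescale k).symm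
      _ ≤ ENNReal.ofReal (2 * M ^ m) ^ k * ν (closedBall x (ρ / M ^ k)) := by gcongr
      _ ≤ ν (closedBall x ρ) :=
        pow_mul_measure_closedBall_div_pow_le hM.le (fun s hs ↦ (hfail s hs).le) hρ k
  have hpos : μ (closedBall x ρ) ≠ 0 := (measure_closedBall_pos μ x hρ.1).ne'
  have hlim : Tendsto (fun k : ℕ ↦ 2 ^ k * μ (closedBall x ρ)) atTop (𝓝 ⊤) := by
    simpa only [ENNReal.top_mul hpos] using ENNReal.Tendsto.mul_const (b := μ (closedBall x ρ))
      (ENNReal.tendsto_pow_atTop_nhds_top_iff.2 ENNReal.one_lt_two) (Or.inl ENNReal.top_ne_zero)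
  exact measure_closedBall_lt_top.not_ge (le_of_tendsto' hlim hbound)

end Doubling

section SphericalSlices

theorem rpow_le_rpow_mul_of_rpow_le {a α : ℝ} (ha : 0 < a) (hα : a ≤ α) {x y z K : ℝ≥0∞}
    (hz : 1 ≤ z) (h : x ^ α ≤ K * (y ^ α * z)) : x ^ a ≤ K ^ (a / α) * (y ^ a * z) := by
  have hα0 : 0 < α := ha.trans_le hα
  have hθ : 0 ≤ a / α := by positivity
  have hαθ : α * (a / α) = a := mul_div_cancel₀ a hα0.ne'
  calc x ^ a = (x ^ α) ^ (a / α) := by rw [← ENNReal.rpow_mul, hαθ]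
    _ ≤ (K * (y ^ α * z)) ^ (a / α) := by gcongr
    _ = K ^ (a / α) * (y ^ a * z ^ (a / α)) := by
      rw [ENNReal.mul_rpow_of_nonneg _ _ hθ, ENNReal.mul_rpow_of_nonneg _ _ hθ,
        ← ENNReal.rpow_mul, hαθ]
    _ ≤ K ^ (a / α) * (y ^ a * z) := by
      gcongr
      exact (ENNReal.rpow_le_rpow_of_exponent_le hz ((div_le_one hα0).2 hα)).trans_eq
        (ENNReal.rpow_one z)

section Haar

variable {E : Type*} [NormedAddCommGroup E] [NormedSpace ℝ E] [FiniteDimensional ℝ E]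
  [MeasurableSpace E] [BorelSpace E] {d : ℕ}

theorem ae_hausdorffMeasure_sphere_lt_top (hd : 0 < d) (hE : Module.finrank ℝ E = d + 1) (x₀ : E) :
    ∀ᵐ r : ℝ, μH[d] (sphere x₀ r) < ⊤ := by
  let μ : Measure E := Measure.addHaar
  set c := μ (ball 0 1)
  have hc : c ≠ 0 := (measure_ball_pos μ 0 one_pos).ne'
  have hc' : c ≠ ⊤ := measure_ball_lt_top.ne
  have hC : 2 ^ (d : ℝ) * c⁻¹ ≠ ⊤ := ENNReal.mul_ne_top (by simp) (ENNReal.inv_ne_top.2 hc)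
  have hdiam {x : E} {s : ℝ} (hs : 0 ≤ s) : ediam (closedBall x s) ≤ 2 * ENNReal.ofReal s :=
    closedEBall_ofReal (x := x) hs ▸ ediam_closedEBall_le
  have hball (x : E) (δ : ℝ) (hδ : 0 < δ) : ∃ s ∈ Ioo 0 δ,
      ediam (id '' closedBall x s) ≤ ENNReal.ofReal δ ∧
        ENNReal.ofReal s * ediam (id '' closedBall x s) ^ (d : ℝ) ≤
          2 ^ (d : ℝ) * c⁻¹ * μ (closedBall x s) := by
    have hs : 0 ≤ δ / 2 := by positivity
    refine ⟨δ / 2, ⟨half_pos hδ, half_lt_self hδ⟩, ?_, ?_⟩ <;> rw [image_id]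
    · refine (hdiam hs).trans_eq ?_
      rw [← ENNReal.ofReal_ofNat, ← ENNReal.ofReal_mul zero_le_two, mul_div_cancel₀ _ two_ne_zero]
    · rw [Measure.addHaar_closedBall _ _ hs, hE, ENNReal.ofReal_pow hs]
      calc ENNReal.ofReal (δ / 2) * ediam (closedBall x (δ / 2)) ^ (d : ℝ)
          ≤ ENNReal.ofReal (δ / 2) * (2 * ENNReal.ofReal (δ / 2)) ^ (d : ℝ) := by
            gcongr
            exact hdiam hs
        _ = 2 ^ (d : ℝ) * (c⁻¹ * c) * ENNReal.ofReal (δ / 2) ^ (d + 1) := by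
            rw [ENNReal.inv_mul_cancel hc hc', ENNReal.rpow_natCast, ENNReal.rpow_natCast]
            ring
        _ = 2 ^ (d : ℝ) * c⁻¹ * (ENNReal.ofReal (δ / 2) ^ (d + 1) * c) := by ring
  have hfinite (R : ℕ) : ∀ᵐ r : ℝ, r ≤ R → μH[d] (sphere x₀ r) < ⊤ := by
    obtain ⟨F, hFm, hF, hFi⟩ := exists_measurable_hausdorffMeasure_image_level_le (ν := μ)
      (A := closedBall x₀ R) (Nat.cast_pos.2 hd) (LipschitzWith.dist_left x₀) hC
      fun x _ ↦ hball x
    have hF_fin : ∫⁻ r, F r ≠ ⊤ := ne_top_of_le_ne_top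
      (ENNReal.mul_ne_top (ENNReal.mul_ne_top ENNReal.ofNat_ne_top hC)
        measure_closedBall_lt_top.ne) hFi
    filter_upwards [ae_lt_top hFm hF_fin] with r hr hrR
    refine (measure_mono fun x hx ↦ ?_).trans_lt ((hF r).trans_lt hr)
    exact ⟨x, ⟨(mem_sphere.1 hx).trans_le hrR, hx⟩, rfl⟩
  filter_upwards [ae_all_iff.2 hfinite] with r hr
  obtain ⟨R, hR⟩ := exists_nat_ge r
  exact hr R hR

end Haar

variable {E F : Type*} [NormedAddCommGroup E] [NormedSpace ℝ E] [FiniteDimensional ℝ E]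
  [MeasureSpace E] [BorelSpace E] [(volume : Measure E).IsAddHaarMeasure]
  {f : E → F} {g : E → ℝ≥0∞} {d : ℕ} {α : ℝ}

theorem ofReal_mul_ediam_image_closedBall_rpow_le [PseudoEMetricSpace F] (hd : 0 < d)
    (hE : Module.finrank ℝ E = d + 1) (hα : d ≤ α) {ν : Measure E} (hν : volume ≤ ν)
    {C Λ : ℝ≥0∞} {x : E} {s M : ℝ} (hs : 0 < s) (hM : 1 ≤ M)
    (hosc : ediam (f '' closedBall x s) ^ α ≤
      C * (ENNReal.ofReal s ^ α * ⨍⁻ y in closedBall x (M * s), g y ∂volume))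
    (hgν : ∫⁻ y in closedBall x (M * s), g y ≤ ν (closedBall x (M * s)))
    (hdoubling : ν (closedBall x (M * s)) ≤ Λ * ν (closedBall x s)) :
    ENNReal.ofReal s * ediam (f '' closedBall x s) ^ (d : ℝ) ≤
      (C * Λ) ^ (d / α) * (volume (ball (0 : E) 1))⁻¹ * ν (closedBall x s) := by
  set σ := ENNReal.ofReal s
  set c := volume (ball (0 : E) 1)
  set B := volume (closedBall x s)
  set V := ν (closedBall x s)
  have hσ : σ ≠ 0 := (ENNReal.ofReal_pos.2 hs).ne'
  have hB0 : B ≠ 0 := (measure_closedBall_pos _ x hs).ne'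
  have hBtop : B ≠ ⊤ := measure_closedBall_lt_top.ne
  have hB : B = σ ^ (d + 1) * c := by
    rw [← ENNReal.ofReal_pow hs.le, ← hE]
    exact Measure.addHaar_closedBall _ x hs.le
  have hmean : ⨍⁻ y in closedBall x (M * s), g y ∂volume ≤ Λ * (V / B) := by
    rw [setLAverage_eq, ← mul_div_assoc]
    exact ENNReal.div_le_div (hgν.trans hdoubling)
      (measure_mono (closedBall_subset_closedBall (le_mul_of_one_le_left hs.le hM)))
  have hV : 1 ≤ V / B := by
    rw [ENNReal.le_div_iff_mul_le (.inl hB0) (.inl hBtop), one_mul]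
    exact hν _
  have hpow : ediam (f '' closedBall x s) ^ α ≤ C * Λ * (σ ^ α * (V / B)) :=
    calc _ ≤ C * (σ ^ α * (Λ * (V / B))) := hosc.trans (by gcongr)
      _ = _ := by ring
  calc σ * ediam (f '' closedBall x s) ^ (d : ℝ)
      ≤ σ * ((C * Λ) ^ (d / α) * (σ ^ (d : ℝ) * (V / B))) := by
        gcongr
        exact rpow_le_rpow_mul_of_rpow_le (Nat.cast_pos.2 hd) hα hV hpow
    _ = (C * Λ) ^ (d / α) * (σ ^ (d + 1) * (σ ^ (d + 1))⁻¹) * c⁻¹ * V := by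
        rw [hB, div_eq_mul_inv V, ENNReal.mul_inv (.inl (pow_ne_zero _ hσ))
          (.inl (ENNReal.pow_ne_top ENNReal.ofReal_ne_top)), ENNReal.rpow_natCast]
        ring
    _ = (C * Λ) ^ (d / α) * c⁻¹ * V := by
        rw [ENNReal.mul_inv_cancel (pow_ne_zero _ hσ)
          (ENNReal.pow_ne_top ENNReal.ofReal_ne_top), mul_one]

theorem exists_ofReal_mul_ediam_image_closedBall_rpow_le [PseudoMetricSpace F] (hd : 0 < d)
    (hE : Module.finrank ℝ E = d + 1) (hα : d ≤ α) {ν : Measure E} [IsFiniteMeasureOnCompacts ν]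
    (hν : volume ≤ ν) {C : ℝ≥0∞} {x : E} {W : Set E} {M : ℝ} (hM : 1 < M)
    (hosc : ∀ s, 0 < s → closedBall x (M * s) ⊆ W → ediam (f '' closedBall x s) ^ α ≤
      C * (ENNReal.ofReal s ^ α * ⨍⁻ y in closedBall x (M * s), g y ∂volume))
    (hgν : ∀ s, closedBall x s ⊆ W → ∫⁻ y in closedBall x s, g y ≤ ν (closedBall x s))
    (hf : ContinuousAt f x) (hW : W ∈ 𝓝 x) {δ : ℝ} (hδ : 0 < δ) :
    ∃ s ∈ Ioo 0 δ, ediam (f '' closedBall x s) ≤ ENNReal.ofReal δ ∧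
      ENNReal.ofReal s * ediam (f '' closedBall x s) ^ (d : ℝ) ≤
        (C * ENNReal.ofReal (2 * M ^ (d + 1))) ^ (d / α) * (volume (ball (0 : E) 1))⁻¹ *
          ν (closedBall x s) := by
  have hM0 : 0 < M := by linarith
  obtain ⟨η, hη, hη_osc⟩ := Metric.continuousAt_iff.1 hf (δ / 2) (half_pos hδ)
  obtain ⟨e, he, heW⟩ := Metric.nhds_basis_closedBall.mem_iff.1 hW
  obtain ⟨s, ⟨hs, hlt⟩, hdoubling⟩ := exists_measure_closedBall_mul_le hν hM x
    (lt_min hδ (lt_min hη (div_pos he hM0)))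
  rw [hE] at hdoubling
  rw [lt_min_iff, lt_min_iff, lt_div_iff₀' hM0] at hlt
  have hsub : closedBall x (M * s) ⊆ W := (closedBall_subset_closedBall hlt.2.2.le).trans heW
  have hdiam : ediam (f '' closedBall x s) ≤ ENNReal.ofReal δ := by
    refine ediam_le ?_
    rintro _ ⟨y, hy, rfl⟩ _ ⟨z, hz, rfl⟩
    rw [edist_dist]
    gcongr
    linarith [dist_triangle_right (f y) (f z) (f x),
      hη_osc ((mem_closedBall.1 hy).trans_lt hlt.2.1),
      hη_osc ((mem_closedBall.1 hz).trans_lt hlt.2.1)]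
  exact ⟨s, ⟨hs, hlt.1⟩, hdiam, ofReal_mul_ediam_image_closedBall_rpow_le hd hE hα hν hs hM.le
    (hosc s hs hsub) (hgν _ hsub) hdoubling⟩

theorem HasOscillationBound.ae_hausdorffMeasure_image_inter_sphere_eq_zero [MetricSpace F]
    [MeasurableSpace F] [BorelSpace F] {D K N : Set E} (hosc : HasOscillationBound D f g α)
    (hd : 0 < d) (hE : Module.finrank ℝ E = d + 1) (hα : d ≤ α) (hD : IsOpen D)
    (hf : ContinuousOn f D) (hg : ∀ K ⊆ D, IsCompact K → ∫⁻ x in K, g x < ⊤)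
    (hK : IsCompact K) (hKD : K ⊆ D) (hNK : N ⊆ K) (hN : volume N = 0) (x₀ : E) :
    ∀ᵐ r : ℝ, μH[d] (f '' (N ∩ sphere x₀ r)) = 0 := by
  obtain ⟨C, hC, M, hM, hosc⟩ := hosc
  obtain ⟨e, he, heD⟩ := hK.exists_cthickening_subset_open hD hKD
  set W := cthickening e K
  have : IsFiniteMeasure ((volume.restrict W).withDensity g) :=
    isFiniteMeasure_withDensity (hg W heD hK.cthickening).ne
  set ν : Measure E := volume + (volume.restrict W).withDensity g
  have : IsFiniteMeasureOnCompacts ν := ⟨fun _ hL ↦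
    ENNReal.add_lt_top.2 ⟨hL.measure_lt_top, measure_lt_top _ _⟩⟩
  have hνN : ν N = 0 := by
    rw [Measure.add_apply, hN, zero_add]
    exact withDensity_absolutelyContinuous _ g (Measure.restrict_le_self.absolutelyContinuous hN)
  have hgν {x : E} {s : ℝ} (hsub : closedBall x s ⊆ W) :
      ∫⁻ y in closedBall x s, g y ≤ ν (closedBall x s) := by
    rw [Measure.add_apply, withDensity_apply _ measurableSet_closedBall,
      Measure.restrict_restrict measurableSet_closedBall, inter_eq_left.2 hsub]
    exact le_add_self
  have hC' : (C * ENNReal.ofReal (2 * M ^ (d + 1))) ^ (d / α) * (volume (ball (0 : E) 1))⁻¹ ≠ ⊤ :=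
    ENNReal.mul_ne_top (ENNReal.rpow_ne_top_of_nonneg
      (div_nonneg d.cast_nonneg (d.cast_nonneg.trans hα))
      (ENNReal.mul_ne_top hC ENNReal.ofReal_ne_top))
      (ENNReal.inv_ne_top.2 (measure_ball_pos _ _ one_pos).ne')
  obtain ⟨Φ, hΦm, hΦ, hΦi⟩ := exists_measurable_hausdorffMeasure_image_level_le (ν := ν)
    (f := f) (A := N) (Nat.cast_pos.2 hd) (LipschitzWith.dist_left x₀) hC' fun x hx δ hδ ↦
      exists_ofReal_mul_ediam_image_closedBall_rpow_le hd hE hα (Measure.le_add_right le_rfl) hM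
        (fun s hs hsub ↦ hosc x s hs (hsub.trans heD)) (fun s ↦ hgν)
        (hf.continuousAt (hD.mem_nhds (hKD (hNK hx))))
        (mem_of_superset (closedBall_mem_nhds x he) (closedBall_subset_cthickening (hNK hx) e)) hδ
  rw [hνN, mul_zero] at hΦi
  filter_upwards [(lintegral_eq_zero_iff hΦm).1 (nonpos_iff_eq_zero.1 hΦi)] with r hr
  exact nonpos_iff_eq_zero.1 ((hΦ r).trans_eq hr)

end SphericalSlices

section AreaInequality

section Metric

variable {X Y : Type*} [MetricSpace X] [MeasurableSpace X] [BorelSpace X]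
  [TopologicalSpace.SeparableSpace X] [MetricSpace Y] [MeasurableSpace Y] [BorelSpace Y]
  {f : X → Y} {A : Set X} {d : ℝ} {L : ℝ≥0}

theorem hausdorffMeasure_image_le_of_dist_lt (hd : 0 ≤ d) {ε : ℝ} (hε : 0 < ε)
    (hf : ∀ x ∈ A, ∀ y ∈ A, dist x y < ε → dist (f x) (f y) ≤ L * dist x y) :
    μH[d] (f '' A) ≤ (L : ℝ≥0∞) ^ d * μH[d] A := by
  rcases isEmpty_or_nonempty X with hX | hX
  · simp [eq_empty_of_isEmpty A]
  set B : ℕ → Set X := fun j ↦ ball (TopologicalSpace.denseSeq X j) (ε / 2)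
  set P := disjointed B
  have hPm (j : ℕ) : MeasurableSet (P j) := .disjointed (fun i ↦ measurableSet_ball) j
  have hP_univ : ⋃ j, P j = univ := by
    refine (iUnion_disjointed (f := B)).trans (eq_univ_of_forall fun x ↦ ?_)
    exact mem_iUnion.2 ((TopologicalSpace.denseRange_denseSeq X).exists_dist_lt x (half_pos hε))
  have hpiece (j : ℕ) : μH[d] (f '' (A ∩ P j)) ≤ (L : ℝ≥0∞) ^ d * μH[d] (A ∩ P j) := by
    refine LipschitzOnWith.hausdorffMeasure_image_le
      (.of_dist_le_mul fun x hx y hy ↦ hf x hx.1 y hy.1 ?_) hd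
    have hxB := mem_ball.1 (disjointed_subset B j hx.2)
    have hyB := mem_ball.1 (disjointed_subset B j hy.2)
    linarith [dist_triangle_right x y (TopologicalSpace.denseSeq X j)]
  calc μH[d] (f '' A) = μH[d] (⋃ j, f '' (A ∩ P j)) := by
        rw [← image_iUnion, ← inter_iUnion, hP_univ, inter_univ]
    _ ≤ ∑' j, μH[d] (f '' (A ∩ P j)) := measure_iUnion_le _
    _ ≤ ∑' j, (L : ℝ≥0∞) ^ d * (μH[d] : Measure X).restrict A (P j) :=
        ENNReal.tsum_le_tsum fun j ↦ by
          rw [Measure.restrict_apply (hPm j), inter_comm (P j)]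
          exact hpiece j
    _ = (L : ℝ≥0∞) ^ d * μH[d] A := by
        rw [ENNReal.tsum_mul_left, ← measure_iUnion (disjoint_disjointed B) hPm, hP_univ,
          Measure.restrict_apply_univ]

theorem hausdorffMeasure_image_le_of_eventually_dist_le (hd : 0 ≤ d)
    (hf : ∀ x ∈ A, ∀ᶠ y in 𝓝 x, dist (f y) (f x) ≤ L * dist y x) :
    μH[d] (f '' A) ≤ (L : ℝ≥0∞) ^ d * μH[d] A := by
  set A' : ℕ → Set X := fun k ↦
    {x ∈ A | ∀ y ∈ A, dist y x < 1 / (k + 1) → dist (f y) (f x) ≤ L * dist y x}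
  have hmono : Monotone A' := fun k l hkl x hx ↦
    ⟨hx.1, fun y hy hyx ↦ hx.2 y hy (hyx.trans_le (Nat.one_div_le_one_div hkl))⟩
  have hA : A = ⋃ k, A' k := by
    refine (iUnion_subset fun k ↦ sep_subset _ _).antisymm' fun x hx ↦ ?_
    obtain ⟨ε, hε, hball⟩ := Metric.eventually_nhds_iff.1 (hf x hx)
    obtain ⟨k, hk⟩ := exists_nat_one_div_lt hε
    exact mem_iUnion.2 ⟨k, hx, fun y _ hyx ↦ hball (hyx.trans hk)⟩
  conv_lhs => rw [hA, image_iUnion]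
  rw [Monotone.measure_iUnion fun k l hkl ↦ image_mono (hmono hkl)]
  refine iSup_le fun k ↦ ?_
  calc μH[d] (f '' A' k) ≤ (L : ℝ≥0∞) ^ d * μH[d] (A' k) :=
        hausdorffMeasure_image_le_of_dist_lt hd Nat.one_div_pos_of_nat
          fun x hx y hy ↦ hy.2 x hx.1
    _ ≤ (L : ℝ≥0∞) ^ d * μH[d] A := by
        gcongr
        exact sep_subset _ _

end Metric

theorem le_lintegral_rpow_of_forall_le_lintegral_add_rpow {X : Type*} [MeasurableSpace X]
    {μ : Measure X} [IsFiniteMeasure μ] {p : ℝ} (hp : 1 ≤ p) {h : X → ℝ≥0∞}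
    (hh : AEMeasurable h μ) {a : ℝ≥0∞}
    (ha : ∀ δ : ℝ≥0, 0 < δ → a ≤ ∫⁻ x, (h x + δ) ^ p ∂μ) : a ≤ ∫⁻ x, h x ^ p ∂μ := by
  have hp0 : 0 < p := one_pos.trans_le hp
  set I := (∫⁻ x, h x ^ p ∂μ) ^ (1 / p)
  set m := μ univ ^ (1 / p)
  have hm : m ≠ ⊤ := ENNReal.rpow_ne_top_of_nonneg (by positivity) (measure_ne_top _ _)
  have hminkowski : ∀ δ : ℝ≥0, 0 < δ → a ^ (1 / p) ≤ I + δ * m := fun δ hδ ↦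
    calc a ^ (1 / p) ≤ (∫⁻ x, (h x + δ) ^ p ∂μ) ^ (1 / p) := by
          gcongr
          exact ha δ hδ
      _ ≤ I + (∫⁻ _, (δ : ℝ≥0∞) ^ p ∂μ) ^ (1 / p) :=
          ENNReal.lintegral_Lp_add_le hh aemeasurable_const hp
      _ = I + δ * m := by
          rw [lintegral_const, ENNReal.mul_rpow_of_nonneg _ _ (by positivity), ← ENNReal.rpow_mul,
            mul_one_div_cancel hp0.ne', ENNReal.rpow_one]
  have hlim : Tendsto (fun δ : ℝ≥0 ↦ I + δ * m) (𝓝[>] 0) (𝓝 I) := by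
    have hδ : Tendsto (fun δ : ℝ≥0 ↦ (δ : ℝ≥0∞)) (𝓝[>] 0) (𝓝 0) :=
      (ENNReal.tendsto_coe.2 tendsto_id).mono_left nhdsWithin_le_nhds
    simpa using tendsto_const_nhds.add (ENNReal.Tendsto.mul_const hδ (.inr hm))
  exact (ENNReal.rpow_le_rpow_iff (by positivity)).1
    (ge_of_tendsto hlim (eventually_mem_nhdsWithin.mono hminkowski))

variable {E F : Type*} [NormedAddCommGroup E] [NormedSpace ℝ E] [MeasurableSpace E] [BorelSpace E]
  [TopologicalSpace.SeparableSpace E] [NormedAddCommGroup F] [NormedSpace ℝ F] [CompleteSpace F]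
  [MeasurableSpace F] [BorelSpace F] {f : E → F} {A : Set E} {d : ℝ}

theorem eventually_dist_le_mul_of_hasFDerivAt {G H : Type*} [NormedAddCommGroup G] [NormedSpace ℝ G]
    [NormedAddCommGroup H] [NormedSpace ℝ H] {f : G → H} {f' : G →L[ℝ] H} {x : G} {L : ℝ≥0}
    (hf : HasFDerivAt f f' x) (hL : ‖f'‖₊ < L) :
    ∀ᶠ y in 𝓝 x, dist (f y) (f x) ≤ L * dist y x := by
  have hL' : 0 < (L : ℝ) - ‖f'‖ := sub_pos.2 hL
  filter_upwards [(hasFDerivAt_iff_isLittleO.1 hf).def hL'] with y hy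
  rw [dist_eq_norm, dist_eq_norm]
  calc ‖f y - f x‖ = ‖(f y - f x - f' (y - x)) + f' (y - x)‖ := by rw [sub_add_cancel]
    _ ≤ (L - ‖f'‖) * ‖y - x‖ + ‖f'‖ * ‖y - x‖ :=
        norm_add_le_of_le hy (f'.le_opNorm _)
    _ = L * ‖y - x‖ := by ring

theorem hausdorffMeasure_image_le_setLIntegral_of_nnnorm_fderiv_mem_Ico (hd : 0 ≤ d) {a δ : ℝ≥0}
    (hA : ∀ x ∈ A, DifferentiableAt ℝ f x ∧ ‖fderiv ℝ f x‖₊ ∈ Ico a (a + δ)) :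
    μH[d] (f '' A) ≤ ∫⁻ x in A, (‖fderiv ℝ f x‖ₑ + δ) ^ d ∂μH[d] :=
  calc μH[d] (f '' A) ≤ ((a + δ : ℝ≥0) : ℝ≥0∞) ^ d * μH[d] A :=
        hausdorffMeasure_image_le_of_eventually_dist_le hd fun x hx ↦
          eventually_dist_le_mul_of_hasFDerivAt (hA x hx).1.hasFDerivAt (hA x hx).2.2
    _ = ∫⁻ _ in A, ((a + δ : ℝ≥0) : ℝ≥0∞) ^ d ∂μH[d] := (setLIntegral_const _ _).symm
    _ ≤ ∫⁻ x in A, (‖fderiv ℝ f x‖ₑ + δ) ^ d ∂μH[d] := by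
        refine setLIntegral_mono (((measurable_fderiv ℝ f).enorm.add_const _).pow_const _)
          fun x hx ↦ ?_
        rw [ENNReal.coe_add]
        gcongr
        exact ENNReal.coe_le_coe.2 (hA x hx).2.1

theorem hausdorffMeasure_image_le_lintegral_enorm_fderiv (hd : 1 ≤ d) (hA : MeasurableSet A)
    (hA_fin : μH[d] A ≠ ⊤) (hnull : μH[d] (f '' (A ∩ {x | ¬ DifferentiableAt ℝ f x})) = 0) :
    μH[d] (f '' A) ≤ ∫⁻ x in A, ‖fderiv ℝ f x‖ₑ ^ d ∂μH[d] := by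
  have : IsFiniteMeasure ((μH[d] : Measure E).restrict A) :=
    isFiniteMeasure_restrict.2 hA_fin
  refine le_lintegral_rpow_of_forall_le_lintegral_add_rpow hd
    (measurable_fderiv ℝ f).enorm.aemeasurable fun δ hδ ↦ ?_
  set J : E → ℕ := fun x ↦ ⌊‖fderiv ℝ f x‖₊ / δ⌋₊
  set B : ℕ → Set E := fun j ↦ (A ∩ {x | DifferentiableAt ℝ f x}) ∩ J ⁻¹' {j}
  have hBm (j : ℕ) : MeasurableSet (B j) :=
    (hA.inter (measurableSet_of_differentiableAt ℝ f)).inter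
      (Nat.measurable_floor.comp ((measurable_fderiv ℝ f).nnnorm.div_const δ)
        (measurableSet_singleton j))
  have hB_disj : Pairwise (Function.onFun Disjoint B) := fun i j hij ↦
    Set.disjoint_left.2 fun x hi hj ↦ hij (hi.2.symm.trans hj.2)
  have hlevel (j : ℕ) (x) (hx : x ∈ B j) : ‖fderiv ℝ f x‖₊ ∈ Ico (j * δ) (j * δ + δ) := by
    have hfloor := (Nat.floor_eq_iff (zero_le (a := ‖fderiv ℝ f x‖₊ / δ))).1 hx.2
    rwa [le_div_iff₀ hδ, div_lt_iff₀ hδ, add_one_mul] at hfloor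
  have hcover : f '' A ⊆ f '' (A ∩ {x | ¬ DifferentiableAt ℝ f x}) ∪ ⋃ j, f '' B j := by
    rintro _ ⟨x, hx, rfl⟩
    by_cases hfx : DifferentiableAt ℝ f x
    · exact .inr (mem_iUnion.2 ⟨J x, x, ⟨⟨hx, hfx⟩, rfl⟩, rfl⟩)
    · exact .inl ⟨x, ⟨hx, hfx⟩, rfl⟩
  calc μH[d] (f '' A) ≤ μH[d] (⋃ j, f '' B j) :=
        (measure_mono hcover).trans ((measure_union_le _ _).trans_eq (by rw [hnull, zero_add]))
    _ ≤ ∑' j, ∫⁻ x in B j, (‖fderiv ℝ f x‖ₑ + δ) ^ d ∂μH[d] :=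
        (measure_iUnion_le _).trans <| ENNReal.tsum_le_tsum fun j ↦
          hausdorffMeasure_image_le_setLIntegral_of_nnnorm_fderiv_mem_Ico (zero_le_one.trans hd)
            fun x hx ↦ ⟨hx.1.2, hlevel j x hx⟩
    _ = ∫⁻ x in ⋃ j, B j, (‖fderiv ℝ f x‖ₑ + δ) ^ d ∂μH[d] :=
        (lintegral_iUnion hBm hB_disj _).symm
    _ ≤ ∫⁻ x in A, (‖fderiv ℝ f x‖ₑ + δ) ^ d ∂μH[d] :=
        lintegral_mono_set (iUnion_subset fun j x hx ↦ hx.1.1)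

theorem setLIntegral_image_le_lintegral_enorm_fderiv_mul (hd : 1 ≤ d) (hA : MeasurableSet A)
    (hA_fin : μH[d] A ≠ ⊤) (hf : ContinuousOn f A)
    (hnull : μH[d] (f '' (A ∩ {x | ¬ DifferentiableAt ℝ f x})) = 0) {g : F → ℝ≥0∞}
    (hg : Measurable g) :
    ∫⁻ y in f '' A, g y ∂μH[d] ≤ ∫⁻ x in A, g (f x) * ‖fderiv ℝ f x‖ₑ ^ d ∂μH[d] := by
  set φ : E → F := A.piecewise f 0
  have hφ : Measurable φ := hf.measurable_piecewise continuousOn_const hA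
  have hφf : EqOn φ f A := piecewise_eqOn A f 0
  have hJ : Measurable fun x ↦ ‖fderiv ℝ f x‖ₑ ^ d := (measurable_fderiv ℝ f).enorm.pow_const d
  set ν := ((μH[d] : Measure E).restrict A).withDensity fun x ↦ ‖fderiv ℝ f x‖ₑ ^ d
  have hle : (μH[d] : Measure F).restrict (f '' A) ≤ ν.map φ := by
    refine Measure.le_iff.2 fun B hB ↦ ?_
    have himage : B ∩ f '' A = f '' (φ ⁻¹' B ∩ A) := by
      rw [inter_comm (φ ⁻¹' B), hφf.inter_preimage_eq, image_inter_preimage, inter_comm]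
    rw [Measure.restrict_apply hB, Measure.map_apply hφ hB, withDensity_apply _ (hφ hB),
      Measure.restrict_restrict (hφ hB), himage]
    exact hausdorffMeasure_image_le_lintegral_enorm_fderiv hd ((hφ hB).inter hA)
      (measure_ne_top_of_subset inter_subset_right hA_fin)
      (measure_mono_null (image_mono (inter_subset_inter_left _ inter_subset_right)) hnull)
  calc ∫⁻ y in f '' A, g y ∂μH[d] ≤ ∫⁻ y, g y ∂ν.map φ := lintegral_mono' hle le_rfl
    _ = ∫⁻ x in A, ‖fderiv ℝ f x‖ₑ ^ d * g (φ x) ∂μH[d] := by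
        rw [lintegral_map hg hφ]
        exact lintegral_withDensity_eq_lintegral_mul _ hJ (hg.comp hφ)
    _ = ∫⁻ x in A, g (f x) * ‖fderiv ℝ f x‖ₑ ^ d ∂μH[d] :=
        setLIntegral_congr_fun hA fun x hx ↦ by simp only [hφf hx, mul_comm]

end AreaInequality

section SphereFamilies

theorem ae_norm_notMem {E : Type*} [NormedAddCommGroup E] [NormedSpace ℝ E]
    [FiniteDimensional ℝ E] [Nontrivial E] [MeasurableSpace E] [BorelSpace E] (μ : Measure E)
    [μ.IsAddHaarMeasure] {Z : Set ℝ} (hZ : volume Z = 0) : ∀ᵐ x ∂μ, ‖x‖ ∉ Z := by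
  have hpow : ∀ᵐ t : Ioi (0 : ℝ) ∂Measure.volumeIoiPow (Module.finrank ℝ E - 1), (t : ℝ) ∉ Z :=
    (withDensity_absolutelyContinuous _ _).ae_le <|
      (ae_restrict_iff_subtype measurableSet_Ioi).1 <|
        ae_restrict_of_ae (measure_eq_zero_iff_ae_notMem.1 hZ)
  have hpolar := μ.measurePreserving_homeomorphUnitSphereProd.quasiMeasurePreserving.ae
    (Measure.quasiMeasurePreserving_snd.ae hpow)
  have hne : ∀ᵐ x ∂μ.restrict {0}ᶜ, ‖x‖ ∉ Z :=
    (ae_restrict_iff_subtype (measurableSet_singleton 0).compl).2 <| by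
      simpa only [homeomorphUnitSphereProd_apply_snd_coe] using hpolar
  rwa [restrict_compl_singleton] at hne

theorem ball_subset_image_sphere_castSucc {d : ℕ} (x₀ : Eucl (d + 1)) {r : ℝ} (hr : 0 < r) :
    ball (fun i : Fin d ↦ x₀ i.castSucc) (r / (d + 1)) ⊆
      (fun (x : Eucl (d + 1)) i ↦ x i.castSucc) '' sphere x₀ r := by
  intro z hz
  set q := ∑ i, (z i - x₀ i.castSucc) ^ 2
  have hq : q ≤ r ^ 2 :=
    calc q ≤ ∑ _i : Fin d, (r / (d + 1)) ^ 2 :=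
          Finset.sum_le_sum fun i _ ↦ sq_le_sq.2 <| by
            rw [abs_of_pos (a := r / (d + 1)) (by positivity), ← Real.dist_eq]
            exact ((dist_le_pi_dist z _ i).trans_lt hz).le
      _ = d / (d + 1) ^ 2 * r ^ 2 := by
          simp only [Finset.sum_const, Finset.card_univ, Fintype.card_fin, nsmul_eq_mul]
          rw [div_pow, mul_div_assoc', div_mul_eq_mul_div]
      _ ≤ 1 * r ^ 2 := by
          gcongr
          rw [div_le_one (by positivity)]
          nlinarith [(d.cast_nonneg : (0 : ℝ) ≤ d)]
      _ = r ^ 2 := one_mul _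
  refine ⟨WithLp.toLp 2 (Fin.snoc (α := fun _ ↦ ℝ) z (x₀ (Fin.last d) + √(r ^ 2 - q))), ?_, ?_⟩
  · rw [mem_sphere, EuclideanSpace.dist_eq, Fin.sum_univ_castSucc]
    simp only [Fin.snoc_castSucc, Fin.snoc_last, Real.dist_eq, sq_abs, add_sub_cancel_left]
    rw [Real.sq_sqrt (sub_nonneg.2 hq), add_sub_cancel, Real.sqrt_sq hr.le]
  · ext i
    simp only [Fin.snoc_castSucc]

theorem hausdorffMeasure_sphere_ne_zero {d : ℕ} (x₀ : Eucl (d + 1)) {r : ℝ} (hr : 0 < r) :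
    μH[d] (sphere x₀ r) ≠ 0 := by
  set π : Eucl (d + 1) → Fin d → ℝ := fun x i ↦ x i.castSucc
  have hπ : LipschitzWith 1 π := LipschitzWith.of_dist_le_mul fun x y ↦ by
    rw [NNReal.coe_one, one_mul, dist_pi_le_iff dist_nonneg]
    exact fun i ↦ PiLp.dist_apply_le x y i.castSucc
  have hvol : (μH[d] : Measure (Fin d → ℝ)) = volume := by
    rw [← hausdorffMeasure_pi_real, Fintype.card_fin]
  refine (lt_of_lt_of_le (measure_ball_pos volume (π x₀) (r := r / (d + 1)) (by positivity)) ?_).ne'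
  calc volume (ball (π x₀) (r / (d + 1))) ≤ volume (π '' sphere x₀ r) :=
        measure_mono (ball_subset_image_sphere_castSucc x₀ hr)
    _ ≤ ((1 : ℝ≥0) : ℝ≥0∞) ^ (d : ℝ) * μH[d] (sphere x₀ r) :=
        hvol ▸ hπ.hausdorffMeasure_image_le d.cast_nonneg _
    _ = μH[d] (sphere x₀ r) := by rw [ENNReal.coe_one, ENNReal.one_rpow, one_mul]

theorem mult_eq_indicator {n k : ℕ} {S : Surface n k} (hS : InjOn S.toFun S.dom) :
    S.mult = (S.toFun '' S.dom).indicator 1 := by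
  ext y
  by_cases hy : y ∈ S.toFun '' S.dom
  · obtain ⟨x, hx, rfl⟩ := hy
    have hfiber : S.dom ∩ S.toFun ⁻¹' {S.toFun x} = {x} :=
      Subset.antisymm (fun z hz ↦ hS hz.1 hx hz.2) (singleton_subset_iff.2 ⟨hx, rfl⟩)
    rw [Surface.mult, hfiber, encard_singleton, indicator_of_mem (mem_image_of_mem _ hx)]
    simp only [ENat.toENNReal_one, Pi.one_apply]
  · have hfiber : S.dom ∩ S.toFun ⁻¹' {y} = ∅ :=
      eq_empty_of_forall_notMem fun z hz ↦ hy ⟨z, hz⟩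
    rw [Surface.mult, hfiber, encard_empty, indicator_of_notMem hy, ENat.toENNReal_zero]

theorem sint_eq_setLIntegral_image {n k : ℕ} {S : Surface n k} (hS : InjOn S.toFun S.dom)
    (himage : MeasurableSet (S.toFun '' S.dom)) (ρ : Eucl n → ℝ≥0∞) :
    S.sint ρ = ∫⁻ y in S.toFun '' S.dom, ρ y ∂μH[k] := by
  rw [Surface.sint, mult_eq_indicator hS, ← lintegral_indicator himage]
  refine lintegral_congr fun y ↦ ?_
  by_cases hy : y ∈ S.toFun '' S.dom <;> simp [hy]

theorem surfModulus_mono {n k : ℕ} {p : ℝ} {Γ Γ' : Set (Surface n k)} (h : Γ ⊆ Γ') :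
    surfModulus p k Γ ≤ surfModulus p k Γ' :=
  biInf_mono fun _ hρ ↦ ⟨hρ.1, fun S hS ↦ hρ.2 S (h hS)⟩

theorem surfModulus_sphereFam_eq_zero {d : ℕ} (hd : 0 < d) {p : ℝ} (hp : 0 < p)
    {D : Set (Eucl (d + 1))} {x₀ : Eucl (d + 1)} {Z : Set ℝ} (hZ : volume Z = 0)
    (hZD : ∀ r ∈ Z, 0 < r ∧ sphere x₀ r ⊆ D) :
    surfModulus p d (sphereFam D x₀ Z : Set (Surface (d + 1) d)) = 0 := by
  set V : Set (Eucl (d + 1)) := {x | dist x x₀ ∈ toMeasurable volume Z}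
  have hV : MeasurableSet V :=
    (measurable_id.dist measurable_const) (measurableSet_toMeasurable _ _)
  have hV_null : ∀ᵐ x, x ∉ V := by
    have := (measurePreserving_sub_right volume x₀).quasiMeasurePreserving.ae
      (ae_norm_notMem volume ((measure_toMeasurable Z).trans hZ))
    simpa only [V, mem_ofPred_eq, dist_eq_norm] using this
  refine nonpos_iff_eq_zero.1 (iInf₂_le_of_le (V.indicator fun _ ↦ ⊤)
    ⟨measurable_const.indicator hV, ?_⟩ (le_of_eq ?_))
  · rintro S ⟨r, hr, -, hS_inj, hS⟩
    rw [inter_eq_left.2 (hZD r hr).2] at hS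
    have hrV : sphere x₀ r ⊆ V := fun x hx ↦
      subset_toMeasurable volume Z (by rwa [mem_sphere.1 hx])
    rw [sint_eq_setLIntegral_image hS_inj (hS ▸ isClosed_sphere.measurableSet), hS]
    calc (1 : ℝ≥0∞) ≤ ⊤ * μH[d] (sphere x₀ r) := by
          rw [ENNReal.top_mul (hausdorffMeasure_sphere_ne_zero x₀ (hZD r hr).1)]
          exact le_top
      _ = ∫⁻ _ in sphere x₀ r, ⊤ ∂μH[d] := (setLIntegral_const _ _).symm
      _ = ∫⁻ x in sphere x₀ r, V.indicator (fun _ ↦ ⊤) x ^ d ∂μH[d] :=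
          setLIntegral_congr_fun isClosed_sphere.measurableSet fun x hx ↦ by
            simp only [indicator_of_mem (hrV hx), ENNReal.top_pow hd.ne']
  · refine lintegral_eq_zero_of_ae_eq_zero ?_
    filter_upwards [hV_null] with x hx
    rw [indicator_of_notMem hx, ENNReal.zero_rpow_of_pos hp, Pi.zero_apply]

end SphereFamilies

section LowerQ

theorem closedBall_subset_of_lt_infEDist_frontier {E : Type*} [NormedAddCommGroup E]
    [NormedSpace ℝ E] [FiniteDimensional ℝ E] {s : Set E} {x : E} (hx : x ∈ s) {r : ℝ}
    (hr : ENNReal.ofReal r < infEDist x (frontier s)) : closedBall x r ⊆ s := by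
  by_cases hs : s = univ
  · exact hs ▸ subset_univ _
  obtain ⟨y, hy, hxy⟩ := exists_mem_frontier_infDist_compl_eq_dist hx hs
  have hr_lt : r < infDist x sᶜ := by
    have := hr.trans_le (Metric.infEDist_le_edist_of_mem hy)
    rw [edist_dist, ← hxy] at this
    exact (ENNReal.ofReal_lt_ofReal_iff'.1 this).1
  exact (closedBall_subset_ball hr_lt).trans ball_infDist_compl_subset

/-- The density `ρ(f(x)) ‖f'(x)‖` on `R`, extended by zero: the competitor which compares the
modulus of a family of surfaces in `R` with that of its image under `f`. -/
noncomputable def pullbackDensity {E F : Type*} [NormedAddCommGroup E] [NormedSpace ℝ E]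
    [NormedAddCommGroup F] [NormedSpace ℝ F] (R : Set E) (f : E → F) (ρ : F → ℝ≥0∞) :
    E → ℝ≥0∞ :=
  R.indicator fun x ↦ ρ (f x) * ‖fderiv ℝ f x‖ₑ

theorem measurable_pullbackDensity {E F : Type*} [NormedAddCommGroup E] [NormedSpace ℝ E]
    [MeasurableSpace E] [BorelSpace E] [NormedAddCommGroup F] [NormedSpace ℝ F]
    [CompleteSpace F] [MeasurableSpace F] [BorelSpace F] {R : Set E} {f : E → F} {ρ : F → ℝ≥0∞}
    (hR : MeasurableSet R) (hf : ContinuousOn f R) (hρ : Measurable ρ) :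
    Measurable (pullbackDensity R f ρ) := by
  have hcongr : pullbackDensity R f ρ =
      R.indicator fun x ↦ ρ (R.piecewise f 0 x) * ‖fderiv ℝ f x‖ₑ :=
    indicator_congr fun x hx ↦ by rw [piecewise_eq_of_mem _ _ _ hx]
  rw [hcongr]
  exact ((hρ.comp (hf.measurable_piecewise continuousOn_const hR)).mul
    (measurable_fderiv ℝ f).enorm).indicator hR

variable {n k : ℕ} {f : Eucl n → Eucl n} {Df : Eucl n → Eucl n →L[ℝ] Eucl n} {R : Set (Eucl n)}
  {ρ : Eucl n → ℝ≥0∞} {p : ℝ}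

theorem one_le_sint_pullbackDensity_pow (hk : 1 ≤ k) {Γ : Set (Surface n k)}
    (hρ : ρ ∈ surfAdm k (imageFam f Γ)) {S : Surface n k} (hSΓ : S ∈ Γ)
    (hS : InjOn S.toFun S.dom) {T : Set (Eucl n)} (hST : S.toFun '' S.dom = T) (hT : IsCompact T)
    (hTR : T ⊆ R) (hT_fin : μH[k] T ≠ ⊤) (hf : ContinuousOn f T) (hf_inj : InjOn f T)
    (hnull : μH[k] (f '' (T ∩ {x | ¬ DifferentiableAt ℝ f x})) = 0) :
    1 ≤ S.sint fun x ↦ pullbackDensity R f ρ x ^ k := by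
  have hmaps : MapsTo S.toFun S.dom T := hST ▸ mapsTo_image _ _
  set S' : Surface n k := ⟨S.dom, S.isOpen_dom, f ∘ S.toFun, hf.comp S.continuousOn hmaps⟩
  have himage : S'.toFun '' S'.dom = f '' T := by rw [← hST, ← image_comp]
  calc 1 ≤ S'.sint fun y ↦ ρ y ^ k := hρ.2 S' ⟨S, hSΓ, rfl, eqOn_refl _ _⟩
    _ = ∫⁻ y in f '' T, ρ y ^ k ∂μH[k] := by
        rw [sint_eq_setLIntegral_image (hf_inj.comp hS hmaps) _ _, himage]
        exact himage ▸ (hT.image_of_continuousOn hf).measurableSet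
    _ ≤ ∫⁻ x in T, ρ (f x) ^ k * ‖fderiv ℝ f x‖ₑ ^ (k : ℝ) ∂μH[k] :=
        setLIntegral_image_le_lintegral_enorm_fderiv_mul (by exact_mod_cast hk) hT.measurableSet
          hT_fin hf hnull (hρ.1.pow_const k)
    _ = ∫⁻ x in T, pullbackDensity R f ρ x ^ k ∂μH[k] :=
        setLIntegral_congr_fun hT.measurableSet fun x hx ↦ by
          simp only [pullbackDensity, indicator_of_mem (hTR hx), mul_pow, ENNReal.rpow_natCast]
    _ = S.sint fun x ↦ pullbackDensity R f ρ x ^ k := by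
        rw [sint_eq_setLIntegral_image hS (hST ▸ hT.measurableSet), hST]

theorem mul_enorm_rpow_div_distortionKp_le (hp : 0 < p) {x : Eucl n} (hdet : 0 ≤ (Df x).det)
    (t : ℝ≥0∞) :
    (t * ‖Df x‖ₑ) ^ p / distortionKp p Df x ≤ ENNReal.ofReal |(Df x).det| * t ^ p := by
  rcases eq_or_ne (Df x) 0 with hDf | hDf
  · rw [← ofReal_norm, hDf, norm_zero, ENNReal.ofReal_zero, mul_zero,
      ENNReal.zero_rpow_of_pos hp, ENNReal.zero_div]
    exact zero_le
  rcases hdet.eq_or_lt with hzero | hpos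
  · rw [distortionKp, if_neg (not_not.2 hzero.symm), if_neg hDf, ENNReal.div_top]
    exact zero_le
  rw [distortionKp, if_pos hpos.ne', ENNReal.ofReal_div_of_pos hpos, abs_of_pos hpos,
    ← ENNReal.ofReal_rpow_of_nonneg (norm_nonneg _) hp.le, ofReal_norm]
  refine ENNReal.div_le_of_le_mul (le_of_eq ?_)
  rw [ENNReal.mul_rpow_of_nonneg _ _ hp.le, mul_right_comm,
    ENNReal.mul_div_cancel (ENNReal.ofReal_pos.2 hpos).ne' ENNReal.ofReal_ne_top, mul_comm]

theorem setLIntegral_pullbackDensity_rpow_div_distortionKp_le (hp : 0 < p) (hR : MeasurableSet R)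
    (hf : InjOn f R) (hDf : ∀ᵐ x ∂volume.restrict R, HasFDerivAt f (Df x) x)
    (hdet : ∀ᵐ x ∂volume.restrict R, 0 ≤ (Df x).det) :
    ∫⁻ x in R, pullbackDensity R f ρ x ^ p / distortionKp p Df x ≤ ∫⁻ y, ρ y ^ p := by
  set G := {x | DifferentiableAt ℝ f x}
  have hG : MeasurableSet G := measurableSet_of_differentiableAt ℝ f
  have hGR : volume.restrict R = volume.restrict (R ∩ G) := by
    rw [inter_comm, ← Measure.restrict_restrict hG]
    exact (Measure.restrict_eq_self_of_ae_mem (hDf.mono fun x hx ↦ hx.differentiableAt)).symm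
  calc ∫⁻ x in R, pullbackDensity R f ρ x ^ p / distortionKp p Df x
      ≤ ∫⁻ x in R, ENNReal.ofReal |(fderiv ℝ f x).det| * ρ (f x) ^ p := by
        refine lintegral_mono_ae ?_
        filter_upwards [hDf, hdet, ae_restrict_mem hR] with x hx hx_det hxR
        rw [pullbackDensity, indicator_of_mem hxR, hx.fderiv]
        exact mul_enorm_rpow_div_distortionKp_le hp hx_det _
    _ = ∫⁻ x in R ∩ G, ENNReal.ofReal |(fderiv ℝ f x).det| * ρ (f x) ^ p := by rw [hGR]
    _ = ∫⁻ y in f '' (R ∩ G), ρ y ^ p :=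
        (lintegral_image_eq_lintegral_abs_det_fderiv_mul volume (hR.inter hG)
          (fun x hx ↦ hx.2.hasFDerivAt.hasFDerivWithinAt) (hf.mono inter_subset_left)
          fun y ↦ ρ y ^ p).symm
    _ ≤ ∫⁻ y, ρ y ^ p := setLIntegral_le_lintegral _ _

theorem isLowerQHomeoAt_distortionKp {d : ℕ} (hd : 1 ≤ d) (hp : 0 < p) {D : Set (Eucl (d + 1))}
    {f : Eucl (d + 1) → Eucl (d + 1)} {Df : Eucl (d + 1) → Eucl (d + 1) →L[ℝ] Eucl (d + 1)}
    (hf : ContinuousOn f D) (hf_inj : InjOn f D)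
    (hDf : ∀ᵐ x ∂volume.restrict D, HasFDerivAt f (Df x) x)
    (hdet : ∀ᵐ x ∂volume.restrict D, 0 ≤ (Df x).det) {x₀ : Eucl (d + 1)} (hx₀ : x₀ ∈ D)
    (hlusin : ∀ K ⊆ D, IsCompact K → ∀ N ⊆ K, volume N = 0 →
      ∀ᵐ r : ℝ, μH[d] (f '' (N ∩ sphere x₀ r)) = 0) :
    IsLowerQHomeoAt D f (distortionKp p Df) p x₀ (infEDist x₀ (frontier D)) := by
  intro ε ε₀ hε _ hε₀
  have hKD : closedBall x₀ ε₀ ⊆ D := closedBall_subset_of_lt_infEDist_frontier hx₀ hε₀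
  set R := ringA x₀ ε ε₀
  have hRK : R ⊆ closedBall x₀ ε₀ := fun x hx ↦ hx.2.le
  have hRD : R ⊆ D := hRK.trans hKD
  have hR : MeasurableSet R :=
    (measurable_id.dist measurable_const) (measurableSet_Ioo (a := ε) (b := ε₀))
  have hsphere : ∀ r ∈ Ioo ε ε₀, sphere x₀ r ⊆ R := fun r hr x hx ↦
    show dist x x₀ ∈ Ioo ε ε₀ from (mem_sphere.1 hx).symm ▸ hr
  set N := closedBall x₀ ε₀ ∩ {x | ¬ DifferentiableAt ℝ f x}
  have hN : volume N = 0 := by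
    have hdiff : ∀ᵐ x, x ∈ closedBall x₀ ε₀ → HasFDerivAt f (Df x) x :=
      (ae_restrict_iff' measurableSet_closedBall).1 (ae_restrict_of_ae_restrict_of_subset hKD hDf)
    refine measure_eq_zero_iff_ae_notMem.2 (hdiff.mono fun x hx hxN ↦ ?_)
    exact hxN.2 (hx hxN.1).differentiableAt
  set Z := {r ∈ Ioo ε ε₀ | ¬ (μH[d] (sphere x₀ r) < ⊤ ∧ μH[d] (f '' (N ∩ sphere x₀ r)) = 0)}
  have hZ : volume Z = 0 :=
    measure_mono_null (fun r hr ↦ hr.2) <| ae_iff.1 <|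
      (ae_hausdorffMeasure_sphere_lt_top hd finrank_euclideanSpace_fin x₀).and
        (hlusin _ hKD (isCompact_closedBall x₀ ε₀) N inter_subset_left hN)
  refine le_iInf₂ fun ρ hρ ↦ iInf₂_le_of_le (pullbackDensity R f ρ)
    ⟨measurable_pullbackDensity hR (hf.mono hRD) hρ.1, ?_⟩ ?_
  · refine nonpos_iff_eq_zero.1 <| (surfModulus_mono ?_).trans_eq <|
      surfModulus_sphereFam_eq_zero hd hp (D := D) hZ fun r hr ↦
        ⟨hε.trans hr.1.1, (hsphere r hr.1).trans hRD⟩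
    rintro S ⟨⟨r, hr, hS_ne, hS_inj, hS⟩, hbad⟩
    refine ⟨r, ⟨hr, fun hgood ↦ hbad ?_⟩, hS_ne, hS_inj, hS⟩
    have hrD := (hsphere r hr).trans hRD
    have hnull := measure_mono_null (image_mono fun x (hx : x ∈ sphere x₀ r ∩ _) ↦
      show x ∈ N ∩ sphere x₀ r from ⟨⟨hRK (hsphere r hr hx.1), hx.2⟩, hx.1⟩) hgood.2
    exact one_le_sint_pullbackDensity_pow hd hρ ⟨r, hr, hS_ne, hS_inj, hS⟩ hS_inj
      (hS.trans (inter_eq_left.2 hrD)) (isCompact_sphere x₀ r) (hsphere r hr) hgood.1.ne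
      (hf.mono hrD) (hf_inj.mono hrD) hnull
  · exact setLIntegral_pullbackDensity_rpow_div_distortionKp_le hp hR (hf_inj.mono hRD)
      (ae_restrict_of_ae_restrict_of_subset hRD hDf)
      (ae_restrict_of_ae_restrict_of_subset hRD hdet)

theorem norm_le_frobNorm {n m : ℕ} (A : Eucl n →L[ℝ] Eucl m) : ‖A‖ ≤ frobNorm A := by
  refine A.opNorm_le_bound (Real.sqrt_nonneg _) fun v ↦ ?_
  have hcoord (i : Fin m) : A v i = ∑ j, A (EuclideanSpace.single j 1) i * v j := by
    have hv : v = ∑ j, v j • EuclideanSpace.single j (1 : ℝ) := by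
      ext i
      simp [Pi.single_apply]
    conv_lhs => rw [hv]
    simp [mul_comm]
  rw [EuclideanSpace.norm_eq, EuclideanSpace.norm_eq, frobNorm, ← Real.sqrt_mul (by positivity),
    Finset.sum_mul]
  simp only [Real.norm_eq_abs, sq_abs, hcoord]
  gcongr with i
  exact Finset.sum_mul_sq_le_sq_mul_sq _ _ _

theorem setLIntegral_enorm_rpow_lt_top {n m : ℕ} {α : ℝ} (hα : 0 ≤ α) {D : Set (Eucl n)}
    {f : Eucl n → Eucl m} {Df : Eucl n → Eucl n →L[ℝ] Eucl m}
    (hf : MemOrliczSobolevOn (fun t ↦ t ^ α) D f Df) {K : Set (Eucl n)} (hKD : K ⊆ D)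
    (hK : IsCompact K) : ∫⁻ x in K, ‖Df x‖ₑ ^ α < ⊤ := by
  refine (lintegral_mono fun x ↦ ?_).trans_lt (hf.2 K hKD hK)
  rw [← ofReal_norm, ENNReal.ofReal_rpow_of_nonneg (norm_nonneg _) hα]
  exact ENNReal.ofReal_le_ofReal (Real.rpow_le_rpow (norm_nonneg _) (norm_le_frobNorm _) hα)

theorem ae_det_nonneg_of_hasFiniteDistortionOn {n : ℕ} {D : Set (Eucl n)}
    {Df : Eucl n → Eucl n →L[ℝ] Eucl n} (h : HasFiniteDistortionOn D Df) :
    ∀ᵐ x ∂volume.restrict D, 0 ≤ (Df x).det := by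
  obtain ⟨K, -, hK⟩ := h
  filter_upwards [hK] with x ⟨hK_one, hKx⟩
  exact nonneg_of_mul_nonneg_right ((by positivity : 0 ≤ ‖Df x‖ ^ n).trans hKx) (by linarith)

end LowerQ

theorem stmt_7_general {n : ℕ} (hn : 2 ≤ n) {α : ℝ} (hα : (n : ℝ) - 1 < α) {D D' : Set (Eucl n)}
    (hD : IsOpen D) {f : Eucl n → Eucl n} {Df : Eucl n → Eucl n →L[ℝ] Eucl n}
    (hf : IsHomeoOn f D D') (hsob : MemOrliczSobolevOn (fun t ↦ t ^ α) D f Df)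
    (hdet : ∀ᵐ x ∂volume.restrict D, 0 ≤ (Df x).det) {p : ℝ} (hp : 0 < p) {x₀ : Eucl n}
    (hx₀ : x₀ ∈ D) :
    IsLowerQHomeoAt D f (distortionKp p Df) p x₀ (infEDist x₀ (frontier D)) := by
  obtain ⟨d, rfl⟩ : ∃ d, n = d + 1 := ⟨n - 1, by omega⟩
  have hd : 1 ≤ d := by omega
  have hdα : (d : ℝ) < α := by simpa using hα
  have hα0 : 0 < α := d.cast_nonneg.trans_lt hdα
  have henergy : ∀ K ⊆ D, IsCompact K → ∫⁻ x in K, ‖Df x‖ₑ ^ α < ⊤ :=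
    fun K ↦ setLIntegral_enorm_rpow_lt_top hα0.le hsob
  have hosc : HasOscillationBound D f (fun x ↦ ‖Df x‖ₑ ^ α) α :=
    hsob.1.hasOscillationBound hd hdα hf.continuousOn hf.isOpenMapOn
  have hmeas : AEMeasurable (fun x ↦ ‖Df x‖ₑ ^ α) (volume.restrict D) :=
    (hsob.1.2.1.aestronglyMeasurable.enorm).pow_const α
  have hDf : ∀ᵐ x ∂volume.restrict D, HasFDerivAt f (Df x) x :=
    hsob.1.ae_hasFDerivAt hD hα0 hosc hmeas henergy
  exact isLowerQHomeoAt_distortionKp hd hp hf.continuousOn hf.injOn hDf hdet hx₀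
    fun K hKD hK N hNK hN ↦ hosc.ae_hausdorffMeasure_image_inter_sphere_eq_zero hd
      finrank_euclideanSpace_fin hdα.le hD hf.continuousOn henergy hK hKD hNK hN x₀

/-- any homeomorphism of finite distortion between domains in `ℝⁿ`, `n ≥ 3`, of
the Sobolev class `W^{1,α}_loc` with `α > n-1`, is a lower `K_p(·,f)`-homeomorphism w.r.t.
the `p`-modulus at every point, for every `p > n-1`. -/
theorem stmt_7 (n : ℕ) (hn : 3 ≤ n) (α : ℝ) (hα : (n : ℝ) - 1 < α)
    (D D' : Set (Eucl n))
    (hDopen : IsOpen D) (hDconn : IsConnected D)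
    (hD'open : IsOpen D') (hD'conn : IsConnected D')
    (f : Eucl n → Eucl n) (Df : Eucl n → Eucl n →L[ℝ] Eucl n)
    (hf : IsHomeoOn f D D')
    (hsob : MemOrliczSobolevOn (fun t => t ^ α) D f Df)
    (hfd : HasFiniteDistortionOn D Df)
    (p : ℝ) (hp : (n : ℝ) - 1 < p) (x₀ : Eucl n) (hx₀ : x₀ ∈ D) :
    IsLowerQHomeoAt D f (distortionKp p Df) p x₀ (EMetric.infEdist x₀ (frontier D)) := by
  have hp0 : 0 < p := (sub_nonneg.2 (by exact_mod_cast (by omega : 1 ≤ n))).trans_lt hp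
  exact stmt_7_general (by omega) hα hDopen hf hsob (ae_det_nonneg_of_hasFiniteDistortionOn hfd)
    hp0 hx₀
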